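/- arXiv:1510.03052 — 2 statements merged into one kernel-verified Lean document; each statement's English description precedes it below -/
import Mathlib

section
/- Every uniquely pancyclic (UPC) graph on v vertices with at most v + 3 edges satisfies v ∈ {3, 5, 8, 14}. -/
open SimpleGraph

/-- The number of cycles of length `k` in `G`, counted as subgraphs of `G`
isomorphic to the cycle graph `C_k`. -/
noncomputable def cycleCount {V : Type*} (G : SimpleGraph V) (k : ℕ) : ℕ :=
  {H : G.Subgraph | Nonempty (H.coe ≃g cycleGraph k)}.ncard

/-- A graph on `v ≥ 3` vertices is `(r)`-pancyclic if it contains precisely `r`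
cycles of every length from `3` to `v`. -/
def IsRPancyclic {V : Type*} [Fintype V] (G : SimpleGraph V) (r : ℕ) : Prop :=
  3 ≤ Fintype.card V ∧
    ∀ k : ℕ, 3 ≤ k → k ≤ Fintype.card V → cycleCount G k = r

/-!
Fix a spanning circuit `H`. An even edge set `E` is determined up to `E ↔ E ∆ H` by its set of
chords `E \ H`, so each set of chords carries at most two circuits, and when it carries two of them
their lengths add up to `#H + 2 * #(E \ H)`. Comparing the number of circuits with that of the
lengths `3, …, #H` determines `#H` from the number of chord sets that carry one or two circuits.
With three chords the sum of the lengths excludes nearly all crossing patterns with `#H ≠ 14`, and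
the lengths themselves exclude the remaining two.
-/

section Finset

open Finset
open scoped symmDiff

variable {α : Type*}

theorem map_val_eq_sum_singleton {β : Type*} (s : Finset α) (f : α → β) :
    s.val.map f = ∑ a ∈ s, ({f a} : Multiset β) := by
  rw [← Multiset.sum_map_singleton (s.val.map f), Multiset.map_map, sum_eq_multiset_sum]
  rfl

theorem sum_powerset_singleton {M : Type*} [AddCommMonoid M] (f : Finset α → M) (a : α) :
    ∑ s ∈ powerset {a}, f s = f ∅ + f {a} := by
  classical
  rw [← insert_empty, sum_powerset_insert (notMem_empty a), powerset_empty, sum_singleton,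
    sum_singleton]

variable [DecidableEq α]

theorem card_symmDiff_add_two_mul_card_inter (s t : Finset α) :
    #(s ∆ t) + 2 * #(s ∩ t) = #s + #t := by
  have hst := card_sdiff_add_card_inter s t
  have hts := card_sdiff_add_card_inter t s
  rw [inter_comm] at hts
  rw [symmDiff, sup_eq_union, card_union_of_disjoint disjoint_sdiff_sdiff]
  omega

theorem symmDiff_sdiff_distrib (s t u : Finset α) : (s ∆ t) \ u = (s \ u) ∆ (t \ u) := by
  ext a
  simp only [mem_sdiff, mem_symmDiff]
  tauto

theorem card_add_card_symmDiff (s t : Finset α) : #s + #(s ∆ t) = #t + 2 * #(s \ t) := by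
  have hsymm := card_symmDiff_add_two_mul_card_inter s t
  have hsdiff := card_sdiff_add_card_inter s t
  omega

theorem mem_symmDiff_right_iff {s t : Finset α} {a : α} (ha : a ∈ t) : a ∈ s ∆ t ↔ a ∉ s := by
  simp only [mem_symmDiff, ha, not_true_eq_false, and_false, true_and, false_or]

theorem sum_powerset_pair {M : Type*} [AddCommMonoid M] (f : Finset α → M) {a b : α}
    (hab : a ≠ b) : ∑ s ∈ powerset {a, b}, f s = f ∅ + f {a} + f {b} + f {a, b} := by
  rw [sum_powerset_insert (notMem_singleton.mpr hab), sum_powerset_singleton,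
    sum_powerset_singleton, insert_empty]
  abel

theorem sum_powerset_triple {M : Type*} [AddCommMonoid M] (f : Finset α → M) {a b c : α}
    (hab : a ≠ b) (hac : a ≠ c) (hbc : b ≠ c) :
    ∑ s ∈ powerset {a, b, c}, f s =
      f ∅ + f {a} + f {b} + f {c} + f {a, b} + f {a, c} + f {b, c} + f {a, b, c} := by
  rw [sum_powerset_insert (by simp [hab, hac]), sum_powerset_pair _ hbc, sum_powerset_pair _ hbc,
    insert_empty]
  abel

end Finset

section EvenSets

open Finset
open scoped symmDiff

variable {V : Type*} [DecidableEq V] {E F H : Finset (Sym2 V)}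

/-- An edge set is even if it meets every vertex in an even number of edges. The even sets form the
cycle space over `ZMod 2`, whose addition is the symmetric difference. -/
def IsEven (E : Finset (Sym2 V)) : Prop :=
  ∀ v, Even #{e ∈ E | v ∈ e}

/-- The circuits are the inclusion-minimal nonempty even sets; in a loopless graph these are the
edge sets of the cycles. -/
def IsCircuit (E : Finset (Sym2 V)) : Prop :=
  Minimal (fun F ↦ F.Nonempty ∧ IsEven F) E

theorem IsEven.symmDiff (hE : IsEven E) (hF : IsEven F) : IsEven (E ∆ F) := by
  intro v
  have hfilter : {e ∈ E ∆ F | v ∈ e} = {e ∈ E | v ∈ e} ∆ {e ∈ F | v ∈ e} := by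
    ext e
    simp only [mem_filter, mem_symmDiff]
    tauto
  have hcard := card_symmDiff_add_two_mul_card_inter {e ∈ E | v ∈ e} {e ∈ F | v ∈ e}
  have hE := hE v
  have hF := hF v
  rw [hfilter]
  grind

theorem IsEven.sdiff (hE : IsEven E) (hF : IsEven F) (h : F ⊆ E) : IsEven (E \ F) := by
  simpa only [symmDiff_of_ge h] using hE.symmDiff hF

theorem IsCircuit.nonempty (hE : IsCircuit E) : E.Nonempty := hE.prop.1

theorem IsCircuit.isEven (hE : IsCircuit E) : IsEven E := hE.prop.2

theorem IsCircuit.eq_of_subset (hE : IsCircuit E) (hF : IsEven F) (hF₀ : F.Nonempty)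
    (h : F ⊆ E) : F = E :=
  (hE.eq_of_ge ⟨hF₀, hF⟩ h).symm

theorem IsEven.exists_isCircuit_subset (hE : IsEven E) (hE₀ : E.Nonempty) :
    ∃ C ⊆ E, IsCircuit C :=
  exists_minimal_le_of_wellFoundedLT _ E ⟨hE₀, hE⟩

theorem not_isCircuit_symmDiff_of_disjoint (hE : IsEven E) (hE₀ : E.Nonempty) (hF₀ : F.Nonempty)
    (h : Disjoint E F) : ¬ IsCircuit (E ∆ F) := by
  intro hc
  rw [symmDiff_eq_union h] at hc
  have hEF : E = E ∪ F := hc.eq_of_subset hE hE₀ subset_union_left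
  obtain ⟨e, he⟩ := hF₀
  exact disjoint_left.mp h (hEF ▸ mem_union_right E he) he

end EvenSets
section Cycles

open Finset
open scoped symmDiff

section Subgraph

variable {V : Type*} {G : SimpleGraph V} {K L : G.Subgraph} {E : Finset (Sym2 V)} {k : ℕ}

theorem mk_mem_iff_adj (hE : (E : Set (Sym2 V)) = K.edgeSet) (u v : V) :
    s(u, v) ∈ E ↔ K.Adj u v := by
  rw [← Subgraph.mem_edgeSet, ← hE, mem_coe]

theorem connected_of_iso_cycleGraph (hk : 3 ≤ k) (φ : K.coe ≃g cycleGraph k) : K.Connected := by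
  obtain ⟨k, rfl⟩ := Nat.exists_eq_add_of_le' hk
  exact ⟨φ.connected_iff.mpr cycleGraph_connected⟩

theorem ncard_neighborSet_of_iso_cycleGraph (hk : 3 ≤ k) (φ : K.coe ≃g cycleGraph k) {v : V}
    (hv : v ∈ K.verts) : (K.neighborSet v).ncard = 2 := by
  obtain ⟨k, rfl⟩ := Nat.exists_eq_add_of_le' hk
  rw [← Nat.card_coe_set_eq, Nat.card_congr (K.coeNeighborSetEquiv ⟨v, hv⟩).symm,
    Nat.card_congr (φ.mapNeighborSet ⟨v, hv⟩), Nat.card_eq_fintype_card, card_neighborSet_eq_degree,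
    cycleGraph_degree_three_le]

theorem card_edgeFinset_cycleGraph (hk : 3 ≤ k) : #(cycleGraph k).edgeFinset = k := by
  obtain ⟨k, rfl⟩ := Nat.exists_eq_add_of_le' hk
  have hsum := (cycleGraph (k + 3)).sum_degrees_eq_twice_card_edges
  simp only [cycleGraph_degree_three_le, sum_const, card_univ, Fintype.card_fin, smul_eq_mul]
    at hsum
  omega

theorem ncard_edgeSet_of_iso_cycleGraph (hk : 3 ≤ k) (φ : K.coe ≃g cycleGraph k) :
    K.edgeSet.ncard = k := by
  rw [← K.image_coe_edgeSet_coe,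
    Set.ncard_image_of_injective _ (Sym2.map.injective Subtype.val_injective),
    ← Nat.card_coe_set_eq, Nat.card_congr φ.mapEdgeSet, Nat.card_coe_set_eq, ← coe_edgeFinset,
    Set.ncard_coe_finset, card_edgeFinset_cycleGraph hk]

theorem eq_of_edgeSet_eq_of_iso_cycleGraph (hk : 3 ≤ k) (φ : K.coe ≃g cycleGraph k)
    (ψ : L.coe ≃g cycleGraph k) (h : K.edgeSet = L.edgeSet) : K = L := by
  have hadj (u v : V) : K.Adj u v ↔ L.Adj u v := by
    rw [← Subgraph.mem_edgeSet, h, Subgraph.mem_edgeSet]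
  have hmem {M : G.Subgraph} (χ : M.coe ≃g cycleGraph k) (v : V) :
      v ∈ M.verts ↔ ∃ w, M.Adj v w := by
    refine ⟨fun hv ↦ ?_, fun ⟨w, hw⟩ ↦ M.edge_vert hw⟩
    exact Set.nonempty_of_ncard_ne_zero (s := M.neighborSet v)
      (by rw [ncard_neighborSet_of_iso_cycleGraph hk χ hv]; exact two_ne_zero)
  refine Subgraph.ext ?_ (by ext u v; exact hadj u v)
  ext v
  simp only [hmem φ, hmem ψ, hadj]

end Subgraph

variable {V : Type*} [DecidableEq V] {G : SimpleGraph V} {K : G.Subgraph} {E F : Finset (Sym2 V)}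

theorem card_filter_mem_eq_ncard_neighborSet (hE : (E : Set (Sym2 V)) = K.edgeSet) (v : V) :
    #{e ∈ E | v ∈ e} = (K.neighborSet v).ncard := by
  have himage : (({e ∈ E | v ∈ e} : Finset (Sym2 V)) : Set (Sym2 V)) =
      (fun w ↦ s(v, w)) '' K.neighborSet v := by
    ext e
    induction e with | _ a b
    simp only [mem_coe, mem_filter, mk_mem_iff_adj hE, Sym2.mem_iff, Set.mem_image,
      Subgraph.mem_neighborSet, Sym2.eq_iff]
    grind [K.adj_comm]
  rw [← Set.ncard_coe_finset, himage,
    Set.ncard_image_of_injective _ fun _ _ ↦ Sym2.congr_right.mp]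

theorem mem_of_isEven_of_card_filter_mem_le_two (hF : IsEven F) (h : F ⊆ E) {v : V}
    (hv : #{e ∈ E | v ∈ e} ≤ 2) {e f : Sym2 V} (he : e ∈ F) (hve : v ∈ e) (hf : f ∈ E)
    (hvf : v ∈ f) : f ∈ F := by
  have hpos : 0 < #{e ∈ F | v ∈ e} := card_pos.mpr ⟨e, mem_filter.mpr ⟨he, hve⟩⟩
  obtain ⟨k, hk⟩ := hF v
  have heq : {e ∈ F | v ∈ e} = {e ∈ E | v ∈ e} :=
    eq_of_subset_of_card_le (filter_subset_filter (v ∈ ·) h) (by omega)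
  exact (mem_filter.mp (heq ▸ mem_filter.mpr ⟨hf, hvf⟩)).1

theorem isCircuit_of_connected_of_ncard_neighborSet (hE : (E : Set (Sym2 V)) = K.edgeSet)
    (hconn : K.Connected) (hdeg : ∀ v ∈ K.verts, (K.neighborSet v).ncard = 2) : IsCircuit E := by
  have hcard {v : V} (hv : v ∈ K.verts) : #{e ∈ E | v ∈ e} = 2 := by
    rw [card_filter_mem_eq_ncard_neighborSet hE, hdeg v hv]
  have hmem {v : V} {e : Sym2 V} (he : e ∈ E) (hv : v ∈ e) : v ∈ K.verts :=
    K.mem_verts_of_mem_edge (by rwa [← hE]) hv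
  refine ⟨⟨?_, fun v ↦ ?_⟩, fun F ⟨⟨e, heF⟩, hF⟩ hFE f hfE ↦ ?_⟩
  · obtain ⟨u, hu⟩ := hconn.nonempty
    obtain ⟨e, he⟩ := card_pos.mp (hcard hu ▸ two_pos)
    exact ⟨e, (mem_filter.mp he).1⟩
  · by_cases hv : v ∈ K.verts
    · exact hcard hv ▸ even_two
    · rw [filter_false_of_mem fun e he hve ↦ hv (hmem he hve), card_empty]
      exact Even.zero
  · have hreach (a b : K.verts) (ha : ∃ e ∈ F, a.1 ∈ e) : ∃ e ∈ F, b.1 ∈ e := by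
      induction (reachable_iff_reflTransGen a b).mp (hconn.coe.preconnected a b) with
      | refl => exact ha
      | @tail c d _ hcd ih =>
        obtain ⟨e, he, hce⟩ := ih
        exact ⟨s(c.1, d.1), mem_of_isEven_of_card_filter_mem_le_two hF hFE (hcard c.2).le he hce
          ((mk_mem_iff_adj hE _ _).mpr hcd) (Sym2.mem_mk_left _ _), Sym2.mem_mk_right _ _⟩
    obtain ⟨g, hg, hvg⟩ := hreach ⟨_, hmem (hFE heF) e.out_fst_mem⟩
      ⟨_, hmem hfE f.out_fst_mem⟩ ⟨e, heF, e.out_fst_mem⟩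
    exact mem_of_isEven_of_card_filter_mem_le_two hF hFE (hcard (hmem hfE f.out_fst_mem)).le hg hvg
      hfE f.out_fst_mem

theorem isCircuit_of_iso_cycleGraph {k : ℕ} (hk : 3 ≤ k) (φ : K.coe ≃g cycleGraph k)
    (hE : (E : Set (Sym2 V)) = K.edgeSet) : IsCircuit E :=
  isCircuit_of_connected_of_ncard_neighborSet hE (connected_of_iso_cycleGraph hk φ)
    fun _ ↦ ncard_neighborSet_of_iso_cycleGraph hk φ

/-- The end of a longest path has a second edge, which must lead back to the path. -/
theorem not_isAcyclic_fromEdgeSet_of_isEven [Finite V] (hE : IsEven E) (hE₀ : E.Nonempty)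
    (hdiag : ∀ e ∈ E, ¬ e.IsDiag) : ¬ (fromEdgeSet (E : Set (Sym2 V))).IsAcyclic := by
  intro hacyc
  have hadj {a b : V} : (fromEdgeSet (E : Set (Sym2 V))).Adj a b ↔ s(a, b) ∈ E := by
    rw [fromEdgeSet_adj, mem_coe, and_iff_left_iff_imp]
    exact fun h hab ↦ hdiag _ h (Sym2.mk_isDiag_iff.mpr hab)
  obtain ⟨e, he⟩ := hE₀
  induction e with | _ a b
  have : Nonempty V := ⟨a⟩
  obtain ⟨u, v, p, hp, hmax⟩ := Walk.exists_isPath_forall_isPath_length_le_length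
    (fromEdgeSet (E : Set (Sym2 V)))
  have hnil : ¬ p.Nil := by
    have hlen := hmax _ _ _ (Walk.IsPath.of_adj (hadj.mpr he))
    simp only [Walk.length_cons, Walk.length_nil, zero_add] at hlen
    rw [← Walk.length_eq_zero_iff]
    omega
  have hpen : s(v, p.penultimate) ∈ ({e ∈ E | v ∈ e} : Finset _) :=
    mem_filter.mpr ⟨hadj.mp (p.adj_penultimate hnil).symm, Sym2.mem_mk_left _ _⟩
  have hcard : 1 < #{e ∈ E | v ∈ e} := by
    obtain ⟨k, hk⟩ := hE v
    have := card_pos.mpr ⟨_, hpen⟩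
    omega
  obtain ⟨f, hf, hne⟩ := exists_mem_ne hcard s(v, p.penultimate)
  rw [mem_filter] at hf
  obtain ⟨w, rfl⟩ := Sym2.mem_iff_exists.mp hf.2
  have hvw := hadj.mpr hf.1
  by_cases hw : w ∈ p.support
  · exact hne (by rw [hacyc.eq_penultimate_of_adj_end hp hvw hw])
  · have hlen := hmax _ _ _ (hp.concat hw hvw)
    rw [Walk.length_concat] at hlen
    omega

theorem IsCircuit.exists_iso_cycleGraph [Finite V] (hE : IsCircuit E)
    (h : (E : Set (Sym2 V)) ⊆ G.edgeSet) :
    ∃ (K : G.Subgraph) (k : ℕ), 3 ≤ k ∧ Nonempty (K.coe ≃g cycleGraph k) ∧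
      (E : Set (Sym2 V)) = K.edgeSet := by
  have hdiag (e : Sym2 V) (he : e ∈ E) : ¬ e.IsDiag := G.not_isDiag_of_mem_edgeSet (h he)
  have hle : fromEdgeSet (E : Set (Sym2 V)) ≤ G := by
    rw [← fromEdgeSet_edgeSet G]
    exact fromEdgeSet_mono h
  have hcyc := not_isAcyclic_fromEdgeSet_of_isEven hE.isEven hE.nonempty hdiag
  rw [isAcyclic_iff_free_cycleGraph] at hcyc
  push Not at hcyc
  obtain ⟨k, hk, hfree⟩ := hcyc
  obtain ⟨f⟩ := hfree
  let g : Copy (cycleGraph k) G := (Copy.ofLE _ _ hle).comp f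
  have hsub : g.toSubgraph.edgeSet ⊆ E := by
    rw [Subgraph.edgeSet_map]
    rintro _ ⟨e, he, rfl⟩
    induction e with | _ a b
    exact ((fromEdgeSet_adj _).mp (f.toHom.map_adj he)).1
  obtain ⟨C, hC⟩ := (E.finite_toSet.subset hsub).exists_finset_coe
  have hcirc := isCircuit_of_iso_cycleGraph hk g.isoToSubgraph.symm hC
  refine ⟨g.toSubgraph, k, hk, ⟨g.isoToSubgraph.symm⟩, ?_⟩
  rw [← hE.eq_of_subset hcirc.isEven hcirc.nonempty (coe_subset.mp (hC ▸ hsub)), hC]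

open scoped Classical in
/-- The circuits contained in `A`. -/
noncomputable def circuits (A : Finset (Sym2 V)) : Finset (Finset (Sym2 V)) :=
  {E ∈ A.powerset | IsCircuit E}

/-- The lengths of the circuits contained in `A`, with multiplicity. -/
noncomputable def circuitLengths (A : Finset (Sym2 V)) : Multiset ℕ :=
  (circuits A).val.map card

theorem mem_circuits {A : Finset (Sym2 V)} : E ∈ circuits A ↔ E ⊆ A ∧ IsCircuit E := by
  simp only [circuits, mem_filter, mem_powerset]

theorem exists_iso_cycleGraph_of_mem_circuits [Finite V] {A : Finset (Sym2 V)}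
    (hA : (A : Set (Sym2 V)) = G.edgeSet) (hE : E ∈ circuits A) :
    ∃ K : G.Subgraph, 3 ≤ #E ∧ Nonempty (K.coe ≃g cycleGraph #E) ∧
      (E : Set (Sym2 V)) = K.edgeSet := by
  obtain ⟨hEA, hcirc⟩ := mem_circuits.mp hE
  obtain ⟨K, k, hk, ⟨φ⟩, hEK⟩ := hcirc.exists_iso_cycleGraph (hA ▸ coe_subset.mpr hEA)
  obtain rfl : #E = k := by
    rw [← Set.ncard_coe_finset, hEK, ncard_edgeSet_of_iso_cycleGraph hk φ]
  exact ⟨K, hk, ⟨φ⟩, hEK⟩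

theorem cycleCount_eq_count_circuitLengths [Finite V] {A : Finset (Sym2 V)}
    (hA : (A : Set (Sym2 V)) = G.edgeSet) {k : ℕ} (hk : 3 ≤ k) :
    cycleCount G k = (circuitLengths A).count k := by
  have hfin (K : G.Subgraph) : ∃ E : Finset (Sym2 V), (E : Set (Sym2 V)) = K.edgeSet :=
    K.edgeSet.toFinite.exists_finset_coe
  choose edges hedges using hfin
  rw [circuitLengths, Multiset.count_map, ← filter_val, card_val, ← Set.ncard_coe_finset]
  refine Set.ncard_congr (fun K _ ↦ edges K) ?_ ?_ ?_
  · rintro K ⟨φ⟩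
    rw [mem_coe, mem_filter, mem_circuits, ← coe_subset, hedges, hA, ← Set.ncard_coe_finset, hedges,
      ncard_edgeSet_of_iso_cycleGraph hk φ]
    exact ⟨⟨K.edgeSet_subset, isCircuit_of_iso_cycleGraph hk φ (hedges K)⟩, rfl⟩
  · rintro K L ⟨φ⟩ ⟨ψ⟩ h
    exact eq_of_edgeSet_eq_of_iso_cycleGraph hk φ ψ (by rw [← hedges, ← hedges, h])
  · intro E hE
    obtain ⟨hcirc, rfl⟩ := mem_filter.mp (mem_coe.mp hE)
    obtain ⟨K, -, φ, hEK⟩ := exists_iso_cycleGraph_of_mem_circuits hA hcirc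
    exact ⟨K, φ, coe_injective ((hedges K).trans hEK.symm)⟩

theorem circuitLengths_eq_Icc [Fintype V] {A : Finset (Sym2 V)}
    (hA : (A : Set (Sym2 V)) = G.edgeSet) (hG : IsRPancyclic G 1) :
    circuitLengths A = (Icc 3 (Fintype.card V)).val := by
  ext k
  by_cases hk : k ∈ Icc 3 (Fintype.card V)
  · have hmem := mem_Icc.mp hk
    rw [← cycleCount_eq_count_circuitLengths hA hmem.1, hG.2 k hmem.1 hmem.2,
      Multiset.count_eq_one_of_mem (Icc 3 (Fintype.card V)).nodup hk]
  · rw [Multiset.count_eq_zero_of_notMem (s := (Icc _ _).val) hk, Multiset.count_eq_zero,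
      circuitLengths, Multiset.mem_map]
    rintro ⟨E, hE, rfl⟩
    obtain ⟨K, hE₃, ⟨φ⟩, -⟩ := exists_iso_cycleGraph_of_mem_circuits hA hE
    refine hk (mem_Icc.mpr ⟨hE₃, ?_⟩)
    have hcard := Finite.card_subtype_le (· ∈ K.verts)
    rwa [Nat.card_congr φ.toEquiv, Nat.card_eq_fintype_card, Fintype.card_fin,
      Nat.card_eq_fintype_card] at hcard

/-- A side of `x` with respect to `H` is an even set whose only element outside `H` is `x`. If `H`
is a spanning circuit and `x` a chord, the two sides are the cycles that `x` closes with the two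
arcs of `H` between its ends. -/
def IsSide (H : Finset (Sym2 V)) (x : Sym2 V) (P : Finset (Sym2 V)) : Prop :=
  IsEven P ∧ P \ H = {x}

theorem isEven_insert_edges_of_isPath {u v : V} (huv : u ≠ v) {p : G.Walk u v} (hp : p.IsPath)
    (he : s(u, v) ∉ p.edges) : IsEven (insert s(u, v) p.edges.toFinset) := by
  intro x
  have hcount : #{e ∈ p.edges.toFinset | x ∈ e} = p.edges.countP (x ∈ ·) := by
    have hfilter : {e ∈ p.edges.toFinset | x ∈ e} = (p.edges.filter (x ∈ ·)).toFinset := by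
      ext e
      simp only [mem_filter, List.mem_toFinset, List.mem_filter, decide_eq_true_eq]
    rw [hfilter, List.toFinset_card_of_nodup (hp.isTrail.edges_nodup.filter _),
      List.countP_eq_length_filter]
  have hparity := hp.isTrail.even_countP_edges_iff x
  rw [← hcount] at hparity
  rw [filter_insert]
  split_ifs with hx
  · rw [card_insert_of_notMem (by simp [he]), Nat.even_add_one, hparity]
    rcases Sym2.mem_iff.mp hx with rfl | rfl <;> simp [huv]
  · rw [hparity]
    rw [Sym2.mem_iff] at hx
    tauto

theorem exists_isSide_of_iso_cycleGraph [Fintype V] (hV : 3 ≤ Fintype.card V)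
    (φ : K.coe ≃g cycleGraph (Fintype.card V)) {H : Finset (Sym2 V)}
    (hH : (H : Set (Sym2 V)) = K.edgeSet) {e : Sym2 V} (he : e ∈ G.edgeSet) (heH : e ∉ H) :
    ∃ P, IsSide H e P := by
  have hspan : K.IsSpanning := by
    rw [Subgraph.isSpanning_iff, Set.eq_univ_iff_ncard, ← Nat.card_coe_set_eq,
      Nat.card_congr φ.toEquiv, Nat.card_fin, Nat.card_eq_fintype_card]
  have hconn : K.spanningCoe.Connected :=
    (K.spanningCoeEquivCoeOfSpanning hspan).connected_iff.mpr
      (connected_of_iso_cycleGraph hV φ).coe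
  induction e with | _ u v
  obtain ⟨p, hp⟩ := hconn.exists_isPath u v
  have hedges : p.edges.toFinset ⊆ H := by
    intro f hf
    rw [← mem_coe, hH]
    simpa using p.edges_subset_edgeSet (List.mem_toFinset.mp hf)
  refine ⟨_, isEven_insert_edges_of_isPath (G.ne_of_adj he) hp
    fun h ↦ heH (hedges (List.mem_toFinset.mpr h)), ?_⟩
  rw [insert_sdiff_of_notMem _ heH, sdiff_eq_empty_iff_subset.mpr hedges, insert_empty]

/-- The circuit `H` spans `A` if adding any further element of `A`, a chord, creates a side. That
even subsets of `A` have at least three elements says that `A` has no loops or parallel edges. -/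
structure IsSpanningCircuit (A H : Finset (Sym2 V)) : Prop where
  isCircuit : IsCircuit H
  subset : H ⊆ A
  exists_isSide : ∀ x ∈ A, x ∉ H → ∃ P, IsSide H x P
  three_le_card : ∀ E ⊆ A, E.Nonempty → IsEven E → 3 ≤ #E

theorem exists_isSpanningCircuit [Fintype V] {A : Finset (Sym2 V)}
    (hA : (A : Set (Sym2 V)) = G.edgeSet) (hV : 3 ≤ Fintype.card V)
    (h : cycleCount G (Fintype.card V) ≠ 0) :
    ∃ H, IsSpanningCircuit A H ∧ #H = Fintype.card V := by
  obtain ⟨K, ⟨φ⟩⟩ := Set.nonempty_of_ncard_ne_zero h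
  obtain ⟨H, hH⟩ := K.edgeSet.toFinite.exists_finset_coe
  refine ⟨H,
    ⟨isCircuit_of_iso_cycleGraph hV φ hH, ?_, fun x hx hxH ↦ ?_, fun E hEA hE₀ hE ↦ ?_⟩, ?_⟩
  · rw [← coe_subset, hH, hA]
    exact K.edgeSet_subset
  · exact exists_isSide_of_iso_cycleGraph hV φ hH (hA ▸ mem_coe.mpr hx) hxH
  · obtain ⟨C, hCE, hC⟩ := hE.exists_isCircuit_subset hE₀
    obtain ⟨-, hC₃, -⟩ :=
      exists_iso_cycleGraph_of_mem_circuits hA (mem_circuits.mpr ⟨hCE.trans hEA, hC⟩)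
    exact hC₃.trans (card_le_card hCE)
  · rw [← Set.ncard_coe_finset, hH, ncard_edgeSet_of_iso_cycleGraph hV φ]

end Cycles

section Chords

open Finset
open scoped symmDiff

variable {V : Type*} [DecidableEq V] {A H E F P Q R : Finset (Sym2 V)} {x y z : Sym2 V}

/-- The lengths, with multiplicity, of the circuits in `A` whose edges outside `H` form the set
`S`. -/
noncomputable def circuitLengthsOver (A H S : Finset (Sym2 V)) : Multiset ℕ :=
  ({E ∈ circuits A | E \ H = S}).val.map card

theorem sum_circuitLengthsOver (A H : Finset (Sym2 V)) :
    ∑ S ∈ (A \ H).powerset, circuitLengthsOver A H S = circuitLengths A := by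
  simp only [circuitLengthsOver, circuitLengths, map_val_eq_sum_singleton]
  exact sum_fiberwise_of_maps_to (fun E hE ↦ mem_powerset.mpr
    (sdiff_subset_sdiff (mem_circuits.mp hE).1 subset_rfl)) _

theorem IsCircuit.eq_or_eq_symmDiff (hH : IsCircuit H) (hE : IsEven E) (hF : IsEven F)
    (h : F \ H = E \ H) : F = E ∨ F = E ∆ H := by
  rcases (E ∆ F).eq_empty_or_nonempty with h₀ | h₀
  · exact .inl (symmDiff_eq_empty.mp h₀).symm
  · have hsub : E ∆ F ⊆ H := by
      rw [← sdiff_eq_empty_iff_subset, symmDiff_sdiff_distrib, h, symmDiff_self, bot_eq_empty]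
    refine .inr ?_
    rw [← hH.eq_of_subset (hE.symmDiff hF) h₀ hsub, symmDiff_symmDiff_cancel_left]

open scoped Classical in
theorem circuitLengthsOver_eq (hH : IsCircuit H) (hHA : H ⊆ A) (hE : IsEven E) (hEA : E ⊆ A) :
    circuitLengthsOver A H (E \ H) = (if IsCircuit E then {#E} else 0) +
      if IsCircuit (E ∆ H) then {#(E ∆ H)} else 0 := by
  have hfiber : {F ∈ circuits A | F \ H = E \ H} =
      ({E, E ∆ H} : Finset (Finset (Sym2 V))).filter IsCircuit := by
    ext F
    simp only [mem_filter, mem_circuits, mem_insert, mem_singleton]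
    constructor
    · rintro ⟨⟨-, hF⟩, hFE⟩
      exact ⟨hH.eq_or_eq_symmDiff hE hF.isEven hFE, hF⟩
    · rintro ⟨rfl | rfl, hF⟩
      · exact ⟨⟨hEA, hF⟩, rfl⟩
      · exact ⟨⟨symmDiff_subset_union.trans (union_subset hEA hHA), hF⟩, symmDiff_sdiff_right E H⟩
  have hne : E ≠ E ∆ H := fun h ↦ hH.nonempty.ne_empty (symmDiff_eq_left.mp h.symm)
  rw [circuitLengthsOver, hfiber, map_val_eq_sum_singleton, sum_filter, sum_pair hne]

theorem circuitLengthsOver_empty (hH : IsCircuit H) (hHA : H ⊆ A) :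
    circuitLengthsOver A H ∅ = {#H} := by
  have hnot : ¬ IsCircuit (∅ : Finset (Sym2 V)) := fun h ↦ not_nonempty_empty h.nonempty
  have hover := circuitLengthsOver_eq hH hHA hH.isEven hHA
  rwa [sdiff_self, symmDiff_self, bot_eq_empty, if_pos hH, if_neg hnot, add_zero] at hover

section Sides

theorem IsSide.symmDiff (hH : IsEven H) (hP : IsSide H x P) : IsSide H x (P ∆ H) :=
  ⟨hP.1.symmDiff hH, (symmDiff_sdiff_right P H).trans hP.2⟩

theorem IsSide.mem (hP : IsSide H x P) : x ∈ P :=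
  (mem_sdiff.mp (hP.2 ▸ mem_singleton_self x)).1

theorem IsSide.notMem (hP : IsSide H x P) : x ∉ H :=
  (mem_sdiff.mp (hP.2 ▸ mem_singleton_self x)).2

theorem IsSide.eq_of_mem (hP : IsSide H x P) (hy : y ∈ P) (hyH : y ∉ H) : y = x :=
  mem_singleton.mp (hP.2 ▸ mem_sdiff.mpr ⟨hy, hyH⟩)

theorem IsSide.card_add_card_symmDiff (hP : IsSide H x P) : #P + #(P ∆ H) = #H + 2 := by
  rw [_root_.card_add_card_symmDiff, hP.2, card_singleton]

theorem IsSide.symmDiff_sdiff (hP : IsSide H x P) (hQ : IsSide H y Q) (hxy : x ≠ y) :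
    (P ∆ Q) \ H = {x, y} := by
  rw [symmDiff_sdiff_distrib, hP.2, hQ.2,
    symmDiff_eq_union (disjoint_singleton.mpr hxy), ← insert_eq]

theorem IsSide.symmDiff_symmDiff_sdiff (hP : IsSide H x P) (hQ : IsSide H y Q) (hR : IsSide H z R)
    (hxy : x ≠ y) (hxz : x ≠ z) (hyz : y ≠ z) : (P ∆ (Q ∆ R)) \ H = {x, y, z} := by
  rw [symmDiff_sdiff_distrib, hP.2, hQ.symmDiff_sdiff hR hyz,
    symmDiff_eq_union (disjoint_singleton_left.mpr (by simp [hxy, hxz])), ← insert_eq]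

/-- Two chords of a circuit cross if none of their sides are disjoint. -/
def Crosses (H : Finset (Sym2 V)) (x y : Sym2 V) : Prop :=
  ∀ P Q, IsSide H x P → IsSide H y Q → ¬ Disjoint P Q

theorem Crosses.symm (h : Crosses H x y) : Crosses H y x :=
  fun P Q hP hQ hPQ ↦ h Q P hQ hP hPQ.symm

theorem Crosses.exists_mem (h : Crosses H x y) (hxy : x ≠ y) (hP : IsSide H x P)
    (hQ : IsSide H y Q) : ∃ e ∈ H, e ∈ P ∧ e ∈ Q := by
  obtain ⟨e, heP, heQ⟩ := not_disjoint_iff.mp (h P Q hP hQ)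
  refine ⟨e, by_contra fun heH ↦ hxy ?_, heP, heQ⟩
  rw [← hP.eq_of_mem heP heH, hQ.eq_of_mem heQ heH]

theorem Crosses.exists_mem_sdiff (h : Crosses H x y) (hxy : x ≠ y) (hH : IsEven H)
    (hP : IsSide H x P) (hQ : IsSide H y Q) : ∃ e ∈ H, e ∈ P ∧ e ∉ Q := by
  obtain ⟨e, heH, heP, heQ⟩ := h.exists_mem hxy hP (hQ.symmDiff hH)
  exact ⟨e, heH, heP, (mem_symmDiff_right_iff heH).mp heQ⟩

theorem Crosses.exists_mem_compl (h : Crosses H x y) (hxy : x ≠ y) (hH : IsEven H)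
    (hP : IsSide H x P) (hQ : IsSide H y Q) : ∃ e ∈ H, e ∉ P ∧ e ∉ Q := by
  obtain ⟨e, heH, heP, heQ⟩ := h.exists_mem_sdiff hxy hH (hP.symmDiff hH) hQ
  exact ⟨e, heH, (mem_symmDiff_right_iff heH).mp heP, heQ⟩

namespace IsSpanningCircuit

theorem isEven (h : IsSpanningCircuit A H) : IsEven H := h.isCircuit.isEven

theorem subset_of_sdiff_subset (h : IsSpanningCircuit A H) (hE : E \ H ⊆ A) : E ⊆ A := by
  intro e he
  by_cases heH : e ∈ H
  · exact h.subset heH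
  · exact hE (mem_sdiff.mpr ⟨he, heH⟩)

theorem side_subset (h : IsSpanningCircuit A H) (hx : x ∈ A) (hP : IsSide H x P) : P ⊆ A :=
  h.subset_of_sdiff_subset (hP.2 ▸ singleton_subset_iff.mpr hx)

theorem side_eq_or_eq_symmDiff (h : IsSpanningCircuit A H) (hP : IsSide H x P)
    (hQ : IsSide H x Q) : Q = P ∨ Q = P ∆ H :=
  h.isCircuit.eq_or_eq_symmDiff hP.1 hQ.1 (hQ.2.trans hP.2.symm)

theorem exists_mem_side (h : IsSpanningCircuit A H) (hx : x ∈ A) (hP : IsSide H x P) :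
    ∃ e ∈ H, e ∈ P := by
  have hP₃ := h.three_le_card P (h.side_subset hx hP) ⟨x, hP.mem⟩ hP.1
  obtain ⟨e, heP, hex⟩ := exists_mem_ne (by omega : 1 < #P) x
  exact ⟨e, by_contra fun heH ↦ hex (hP.eq_of_mem heP heH), heP⟩

theorem not_subset_of_card_sdiff_lt (h : IsSpanningCircuit A H) (hE : IsEven E) (hEA : E ⊆ A)
    (hE₀ : (E \ H).Nonempty) (hcard : #(E \ H) < 3) : ¬ H ⊆ E := fun hHE ↦
  hcard.not_ge (h.three_le_card _ (sdiff_subset.trans hEA) hE₀ (hE.sdiff h.isEven hHE))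

theorem isCircuit_side (h : IsSpanningCircuit A H) (hx : x ∈ A) (hP : IsSide H x P) :
    IsCircuit P := by
  have hHP : ¬ H ⊆ P := h.not_subset_of_card_sdiff_lt hP.1 (h.side_subset hx hP)
    (hP.2 ▸ singleton_nonempty x) (by rw [hP.2, card_singleton]; norm_num)
  refine ⟨⟨⟨x, hP.mem⟩, hP.1⟩, fun F ⟨hF₀, hF⟩ hFP ↦ ?_⟩
  rcases subset_singleton_iff.mp (hP.2 ▸ sdiff_subset_sdiff hFP subset_rfl) with hFH | hFH
  · refine absurd ?_ hHP
    rwa [← h.isCircuit.eq_of_subset hF hF₀ (sdiff_eq_empty_iff_subset.mp hFH)]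
  · rcases h.side_eq_or_eq_symmDiff hP ⟨hF, hFH⟩ with rfl | rfl
    · exact subset_rfl
    · refine absurd (fun e he ↦ ?_) hHP
      by_contra heP
      exact heP (hFP (mem_symmDiff.mpr (.inr ⟨he, heP⟩)))

theorem circuitLengthsOver_singleton (h : IsSpanningCircuit A H) (hx : x ∈ A)
    (hP : IsSide H x P) : circuitLengthsOver A H {x} = {#P, #(P ∆ H)} := by
  rw [← hP.2, circuitLengthsOver_eq h.isCircuit h.subset hP.1 (h.side_subset hx hP),
    if_pos (h.isCircuit_side hx hP), if_pos (h.isCircuit_side hx (hP.symmDiff h.isEven))]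
  rfl

theorem isCircuit_of_not_subset (h : IsSpanningCircuit A H) (hE : IsEven E)
    (hE₀ : E.Nonempty) (hcard : #(E \ H) ≤ 3) (hHE : ¬ H ⊆ E)
    (hside : ∀ w ∈ E \ H, ∀ F, IsSide H w F → ¬ F ⊆ E) : IsCircuit E := by
  have key {F : Finset (Sym2 V)} (hF : IsEven F) (hF₀ : F.Nonempty) (hFE : F ⊆ E) :
      2 ≤ #(F \ H) := by
    by_contra! hlt
    rcases (F \ H).eq_empty_or_nonempty with h₀ | ⟨w, hw⟩
    · exact hHE (h.isCircuit.eq_of_subset hF hF₀ (sdiff_eq_empty_iff_subset.mp h₀) ▸ hFE)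
    · refine hside w (sdiff_subset_sdiff hFE subset_rfl hw) F ⟨hF, ?_⟩ hFE
      exact (eq_of_subset_of_card_le (singleton_subset_iff.mpr hw)
        (by rw [card_singleton]; omega)).symm
  obtain ⟨C, hCE, hC⟩ := hE.exists_isCircuit_subset hE₀
  have hCcard := key hC.isEven hC.nonempty hCE
  have hparts : #(C \ H) + #((E \ C) \ H) = #(E \ H) := by
    rw [← card_union_of_disjoint (by grind [Finset.disjoint_left])]
    congr 1
    grind
  rcases (E \ C).eq_empty_or_nonempty with h₀ | h₀
  · rwa [← hCE.antisymm (sdiff_eq_empty_iff_subset.mp h₀)]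
  · have := key (hE.sdiff hC.isEven hCE) h₀ sdiff_subset
    omega

theorem isCircuit_of_sdiff_eq_pair (h : IsSpanningCircuit A H) (hE : IsEven E) (hEA : E ⊆ A)
    (hxy : x ≠ y) (hS : E \ H = {x, y}) (hx : ∀ F, IsSide H x F → ¬ F ⊆ E)
    (hy : ∀ F, IsSide H y F → ¬ F ⊆ E) : IsCircuit E := by
  have hE₀ : (E \ H).Nonempty := hS ▸ insert_nonempty x {y}
  have hcard : #(E \ H) = 2 := hS ▸ card_pair hxy
  refine h.isCircuit_of_not_subset hE (hE₀.mono sdiff_subset) (by omega)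
    (h.not_subset_of_card_sdiff_lt hE hEA hE₀ (by omega)) fun w hw ↦ ?_
  rw [hS, mem_insert, mem_singleton] at hw
  rcases hw with rfl | rfl
  exacts [hx, hy]

theorem side_not_subset (h : IsSpanningCircuit A H) (hP : IsSide H x P) {e f : Sym2 V}
    (heP : e ∈ P) (heE : e ∉ E) (hfH : f ∈ H) (hfP : f ∉ P) (hfE : f ∉ E) (F : Finset (Sym2 V))
    (hF : IsSide H x F) : ¬ F ⊆ E := by
  intro hFE
  rcases h.side_eq_or_eq_symmDiff hP hF with rfl | rfl
  · exact heE (hFE heP)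
  · exact hfE (hFE (mem_symmDiff.mpr (.inr ⟨hfH, hfP⟩)))

theorem symmDiff_side_subset (h : IsSpanningCircuit A H) (hx : x ∈ A) (hy : y ∈ A)
    (hP : IsSide H x P) (hQ : IsSide H y Q) : P ∆ Q ⊆ A :=
  symmDiff_subset_union.trans (union_subset (h.side_subset hx hP) (h.side_subset hy hQ))

theorem isCircuit_symmDiff_of_crosses (h : IsSpanningCircuit A H) (hx : x ∈ A) (hy : y ∈ A)
    (hxy : x ≠ y) (hcross : Crosses H x y) (hP : IsSide H x P) (hQ : IsSide H y Q) :
    IsCircuit (P ∆ Q) := by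
  obtain ⟨e, -, heP, heQ⟩ := hcross.exists_mem hxy hP hQ
  obtain ⟨f, hfH, hfP, hfQ⟩ := hcross.exists_mem_compl hxy h.isEven hP hQ
  have he : e ∉ P ∆ Q := by simp [mem_symmDiff, *]
  have hf : f ∉ P ∆ Q := by simp [mem_symmDiff, *]
  exact h.isCircuit_of_sdiff_eq_pair (hP.1.symmDiff hQ.1) (h.symmDiff_side_subset hx hy hP hQ) hxy
    (hP.symmDiff_sdiff hQ hxy) (h.side_not_subset hP heP he hfH hfP hf)
    (h.side_not_subset hQ heQ he hfH hfQ hf)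

theorem isCircuit_symmDiff_of_disjoint (h : IsSpanningCircuit A H) (hx : x ∈ A) (hy : y ∈ A)
    (hxy : x ≠ y) (hP : IsSide H x P) (hQ : IsSide H y Q) (hPQ : Disjoint P Q) :
    IsCircuit ((P ∆ Q) ∆ H) := by
  obtain ⟨e, heH, heP⟩ := h.exists_mem_side hx hP
  obtain ⟨f, hfH, hfQ⟩ := h.exists_mem_side hy hQ
  have heQ := Finset.disjoint_left.mp hPQ heP
  have hfP := Finset.disjoint_right.mp hPQ hfQ
  have he : e ∉ (P ∆ Q) ∆ H := by simp [mem_symmDiff, *]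
  have hf : f ∉ (P ∆ Q) ∆ H := by simp [mem_symmDiff, *]
  exact h.isCircuit_of_sdiff_eq_pair ((hP.1.symmDiff hQ.1).symmDiff h.isEven)
    (symmDiff_subset_union.trans (union_subset (h.symmDiff_side_subset hx hy hP hQ) h.subset)) hxy
    ((symmDiff_sdiff_right _ H).trans (hP.symmDiff_sdiff hQ hxy))
    (h.side_not_subset hP heP he hfH hfP hf) (h.side_not_subset hQ hfQ hf heH heQ he)

theorem circuitLengthsOver_pair_of_crosses (h : IsSpanningCircuit A H) (hx : x ∈ A) (hy : y ∈ A)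
    (hxy : x ≠ y) (hcross : Crosses H x y) (hP : IsSide H x P) (hQ : IsSide H y Q) :
    circuitLengthsOver A H {x, y} = {#(P ∆ Q), #((P ∆ Q) ∆ H)} := by
  have hc := h.isCircuit_symmDiff_of_crosses hx hy hxy hcross hP hQ
  have hc' := h.isCircuit_symmDiff_of_crosses hx hy hxy hcross hP (hQ.symmDiff h.isEven)
  rw [← symmDiff_assoc] at hc'
  rw [← hP.symmDiff_sdiff hQ hxy, circuitLengthsOver_eq h.isCircuit h.subset (hP.1.symmDiff hQ.1)
    (h.symmDiff_side_subset hx hy hP hQ), if_pos hc, if_pos hc']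
  rfl

theorem circuitLengthsOver_pair_of_disjoint (h : IsSpanningCircuit A H) (hx : x ∈ A) (hy : y ∈ A)
    (hxy : x ≠ y) (hP : IsSide H x P) (hQ : IsSide H y Q) (hPQ : Disjoint P Q) :
    circuitLengthsOver A H {x, y} = {#((P ∆ Q) ∆ H)} := by
  have hnot := not_isCircuit_symmDiff_of_disjoint hP.1 ⟨x, hP.mem⟩ ⟨y, hQ.mem⟩ hPQ
  have hc := h.isCircuit_symmDiff_of_disjoint hx hy hxy hP hQ hPQ
  rw [← hP.symmDiff_sdiff hQ hxy, circuitLengthsOver_eq h.isCircuit h.subset (hP.1.symmDiff hQ.1)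
    (h.symmDiff_side_subset hx hy hP hQ), if_neg hnot, if_pos hc, zero_add]

end IsSpanningCircuit

end Sides

section UniqueLengths

/-- The lengths of the circuits in `A` are `3, …, #H`, each attained once. -/
structure HasUniqueLengths (A H : Finset (Sym2 V)) : Prop extends IsSpanningCircuit A H where
  circuitLengths_eq : circuitLengths A = (Icc 3 #H).val

namespace HasUniqueLengths

theorem three_le_card_circuit (h : HasUniqueLengths A H) : 3 ≤ #H :=
  h.three_le_card H h.subset h.isCircuit.nonempty h.isCircuit.isEven

theorem card_eq_three (h : HasUniqueLengths A H) (hS : A \ H = ∅) : #H = 3 := by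
  have hL := h.circuitLengths_eq
  rw [← sum_circuitLengthsOver A H, hS, powerset_empty, sum_singleton,
    circuitLengthsOver_empty h.isCircuit h.subset] at hL
  have hcard := congrArg Multiset.card hL
  rw [Multiset.card_singleton, card_val, Nat.card_Icc] at hcard
  omega

theorem card_eq_five (h : HasUniqueLengths A H) (hS : A \ H = {x}) : #H = 5 := by
  have hx := mem_sdiff.mp (hS ▸ mem_singleton_self x)
  obtain ⟨P, hP⟩ := h.exists_isSide x hx.1 hx.2
  have hL := h.circuitLengths_eq
  rw [← sum_circuitLengthsOver A H, hS, sum_powerset_singleton,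
    circuitLengthsOver_empty h.isCircuit h.subset, h.circuitLengthsOver_singleton hx.1 hP] at hL
  have hcard := congrArg Multiset.card hL
  rw [Multiset.card_add, Multiset.card_singleton, Multiset.card_pair, card_val, Nat.card_Icc]
    at hcard
  omega

/-- If the chords cross, then `#H = 9`, and the lengths sum to `44` instead of `42`. -/
theorem card_eq_eight (h : HasUniqueLengths A H) (hxy : x ≠ y) (hS : A \ H = {x, y}) :
    #H = 8 := by
  have hx := mem_sdiff.mp (hS ▸ mem_insert_self x {y})
  have hy := mem_sdiff.mp (hS ▸ mem_insert_of_mem (mem_singleton_self y))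
  obtain ⟨P, hP⟩ := h.exists_isSide x hx.1 hx.2
  obtain ⟨Q, hQ⟩ := h.exists_isSide y hy.1 hy.2
  have hL := h.circuitLengths_eq
  rw [← sum_circuitLengthsOver A H, hS, sum_powerset_pair _ hxy,
    circuitLengthsOver_empty h.isCircuit h.subset, h.circuitLengthsOver_singleton hx.1 hP,
    h.circuitLengthsOver_singleton hy.1 hQ] at hL
  have hcard := congrArg Multiset.card hL
  have hsum := congrArg Multiset.sum hL
  simp only [Multiset.card_add, Multiset.card_singleton, Multiset.card_pair, card_val, Nat.card_Icc,
    Multiset.sum_add, Multiset.sum_singleton, Multiset.sum_pair, sum_val, id_eq,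
    hP.card_add_card_symmDiff, hQ.card_add_card_symmDiff] at hcard hsum
  by_cases hcross : Crosses H x y
  · rw [h.circuitLengthsOver_pair_of_crosses hx.1 hy.1 hxy hcross hP hQ] at hcard hsum
    rw [Multiset.card_pair] at hcard
    rw [Multiset.sum_pair, card_add_card_symmDiff, hP.symmDiff_sdiff hQ hxy, card_pair hxy] at hsum
    have hn : #H = 9 := by omega
    rw [hn] at hsum
    exact absurd hsum (by decide)
  · simp only [Crosses, not_forall, not_not] at hcross
    obtain ⟨P', Q', hP', hQ', hdisj⟩ := hcross
    rw [h.circuitLengthsOver_pair_of_disjoint hx.1 hy.1 hxy hP' hQ' hdisj,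
      Multiset.card_singleton] at hcard
    omega

end HasUniqueLengths

/-- The edge set `A` consists of the circuit `H` and three distinct chords. -/
structure HasThreeChords (A H : Finset (Sym2 V)) (x y z : Sym2 V) : Prop
    extends HasUniqueLengths A H where
  sdiff_eq : A \ H = {x, y, z}
  ne₁₂ : x ≠ y
  ne₁₃ : x ≠ z
  ne₂₃ : y ≠ z

namespace HasThreeChords

theorem swap_left (h : HasThreeChords A H x y z) : HasThreeChords A H y x z where
  __ := h
  sdiff_eq := h.sdiff_eq.trans (Finset.insert_comm x y {z})
  ne₁₂ := h.ne₁₂.symm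
  ne₁₃ := h.ne₂₃
  ne₂₃ := h.ne₁₃

theorem swap_right (h : HasThreeChords A H x y z) : HasThreeChords A H x z y where
  __ := h
  sdiff_eq := by rw [h.sdiff_eq, pair_comm]
  ne₁₂ := h.ne₁₃
  ne₁₃ := h.ne₁₂
  ne₂₃ := h.ne₂₃.symm

theorem rotate (h : HasThreeChords A H x y z) : HasThreeChords A H y z x :=
  h.swap_left.swap_right

theorem mem (h : HasThreeChords A H x y z) : x ∈ A :=
  (mem_sdiff.mp (h.sdiff_eq ▸ mem_insert_self x {y, z})).1

theorem notMem (h : HasThreeChords A H x y z) : x ∉ H :=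
  (mem_sdiff.mp (h.sdiff_eq ▸ mem_insert_self x {y, z})).2

theorem exists_side (h : HasThreeChords A H x y z) : ∃ P, IsSide H x P :=
  h.exists_isSide x h.mem h.notMem

theorem lengths_eq (h : HasThreeChords A H x y z) (hP : IsSide H x P) (hQ : IsSide H y Q)
    (hR : IsSide H z R) :
    {#H} + {#P, #(P ∆ H)} + {#Q, #(Q ∆ H)} + {#R, #(R ∆ H)} + circuitLengthsOver A H {x, y} +
      circuitLengthsOver A H {x, z} + circuitLengthsOver A H {y, z} +
      circuitLengthsOver A H {x, y, z} = (Icc 3 #H).val := by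
  have hy := h.rotate.mem
  have hz := h.rotate.rotate.mem
  rw [← h.circuitLengths_eq, ← sum_circuitLengthsOver A H, h.sdiff_eq,
    sum_powerset_triple _ h.ne₁₂ h.ne₁₃ h.ne₂₃, circuitLengthsOver_empty h.isCircuit h.subset,
    h.circuitLengthsOver_singleton h.mem hP, h.circuitLengthsOver_singleton hy hQ,
    h.circuitLengthsOver_singleton hz hR]

theorem card_pair_of_crosses (h : HasThreeChords A H x y z) (hxy : Crosses H x y) :
    (circuitLengthsOver A H {x, y}).card = 2 := by
  obtain ⟨P, hP⟩ := h.exists_side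
  obtain ⟨Q, hQ⟩ := h.rotate.exists_side
  rw [h.circuitLengthsOver_pair_of_crosses h.mem h.rotate.mem h.ne₁₂ hxy hP hQ, Multiset.card_pair]

theorem sum_pair_of_crosses (h : HasThreeChords A H x y z) (hxy : Crosses H x y) :
    (circuitLengthsOver A H {x, y}).sum = #H + 4 := by
  obtain ⟨P, hP⟩ := h.exists_side
  obtain ⟨Q, hQ⟩ := h.rotate.exists_side
  rw [h.circuitLengthsOver_pair_of_crosses h.mem h.rotate.mem h.ne₁₂ hxy hP hQ, Multiset.sum_pair,
    card_add_card_symmDiff, hP.symmDiff_sdiff hQ h.ne₁₂, Finset.card_pair h.ne₁₂]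

theorem card_pair_of_disjoint (h : HasThreeChords A H x y z) (hP : IsSide H x P)
    (hQ : IsSide H y Q) (hPQ : Disjoint P Q) : (circuitLengthsOver A H {x, y}).card = 1 := by
  rw [h.circuitLengthsOver_pair_of_disjoint h.mem h.rotate.mem h.ne₁₂ hP hQ hPQ,
    Multiset.card_singleton]

theorem sum_pair_of_disjoint (h : HasThreeChords A H x y z) (hP : IsSide H x P)
    (hQ : IsSide H y Q) (hPQ : Disjoint P Q) :
    #P + #Q + (circuitLengthsOver A H {x, y}).sum = #H + 4 := by
  rw [h.circuitLengthsOver_pair_of_disjoint h.mem h.rotate.mem h.ne₁₂ hP hQ hPQ,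
    Multiset.sum_singleton, ← card_union_of_disjoint hPQ, ← sup_eq_union, ← hPQ.symmDiff_eq_sup,
    card_add_card_symmDiff, hP.symmDiff_sdiff hQ h.ne₁₂, Finset.card_pair h.ne₁₂]

theorem card_eq (h : HasThreeChords A H x y z) :
    #H = 9 + (circuitLengthsOver A H {x, y}).card + (circuitLengthsOver A H {x, z}).card +
      (circuitLengthsOver A H {y, z}).card + (circuitLengthsOver A H {x, y, z}).card := by
  obtain ⟨P, hP⟩ := h.exists_side
  obtain ⟨Q, hQ⟩ := h.rotate.exists_side
  obtain ⟨R, hR⟩ := h.rotate.rotate.exists_side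
  have hcard := congrArg Multiset.card (h.lengths_eq hP hQ hR)
  have hH := h.three_le_card_circuit
  simp only [Multiset.card_add, Multiset.card_singleton, Multiset.card_pair, card_val,
    Nat.card_Icc] at hcard
  omega

theorem sum_eq (h : HasThreeChords A H x y z) :
    4 * #H + 6 + (circuitLengthsOver A H {x, y}).sum + (circuitLengthsOver A H {x, z}).sum +
      (circuitLengthsOver A H {y, z}).sum + (circuitLengthsOver A H {x, y, z}).sum =
      ∑ k ∈ Icc 3 #H, k := by
  obtain ⟨P, hP⟩ := h.exists_side
  obtain ⟨Q, hQ⟩ := h.rotate.exists_side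
  obtain ⟨R, hR⟩ := h.rotate.rotate.exists_side
  have hsum := congrArg Multiset.sum (h.lengths_eq hP hQ hR)
  simp only [Multiset.sum_add, Multiset.sum_singleton, Multiset.sum_pair, sum_val, id_eq] at hsum
  rw [hP.card_add_card_symmDiff, hQ.card_add_card_symmDiff, hR.card_add_card_symmDiff] at hsum
  omega

theorem sdiff_subset (h : HasThreeChords A H x y z) (hE : E \ H = {x, y, z}) : E ⊆ A :=
  h.subset_of_sdiff_subset (hE.trans h.sdiff_eq.symm ▸ Finset.sdiff_subset)

open scoped Classical in
theorem circuitLengthsOver_triple (h : HasThreeChords A H x y z) (hE : IsEven E)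
    (hS : E \ H = {x, y, z}) :
    circuitLengthsOver A H {x, y, z} = (if IsCircuit E then {#E} else 0) +
      if IsCircuit (E ∆ H) then {#(E ∆ H)} else 0 :=
  hS ▸ circuitLengthsOver_eq h.isCircuit h.subset hE (h.sdiff_subset hS)

theorem triple_cases (h : HasThreeChords A H x y z) :
    circuitLengthsOver A H {x, y, z} = 0 ∨
      (∃ F, F \ H = {x, y, z} ∧ IsCircuit F ∧ ¬ IsCircuit (F ∆ H) ∧
        circuitLengthsOver A H {x, y, z} = {#F}) ∨
      ∃ E, E \ H = {x, y, z} ∧ circuitLengthsOver A H {x, y, z} = {#E, #(E ∆ H)} := by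
  obtain ⟨P, hP⟩ := h.exists_side
  obtain ⟨Q, hQ⟩ := h.rotate.exists_side
  obtain ⟨R, hR⟩ := h.rotate.rotate.exists_side
  have hS := hP.symmDiff_symmDiff_sdiff hQ hR h.ne₁₂ h.ne₁₃ h.ne₂₃
  set E := P ∆ (Q ∆ R)
  have hL := h.circuitLengthsOver_triple (hP.1.symmDiff (hQ.1.symmDiff hR.1)) hS
  by_cases hc : IsCircuit E <;> by_cases hc' : IsCircuit (E ∆ H)
  · rw [if_pos hc, if_pos hc'] at hL
    exact .inr (.inr ⟨E, hS, hL⟩)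
  · rw [if_pos hc, if_neg hc', add_zero] at hL
    exact .inr (.inl ⟨E, hS, hc, hc', hL⟩)
  · rw [if_neg hc, if_pos hc', zero_add] at hL
    refine .inr (.inl ⟨E ∆ H, (symmDiff_sdiff_right E H).trans hS, hc', ?_, hL⟩)
    rwa [symmDiff_symmDiff_cancel_right]
  · rw [if_neg hc, if_neg hc', add_zero] at hL
    exact .inl hL

theorem card_triple (h : HasThreeChords A H x y z) : #{x, y, z} = 3 :=
  Finset.card_eq_three.mpr ⟨x, y, z, h.ne₁₂, h.ne₁₃, h.ne₂₃, rfl⟩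

theorem card_triple_symmDiff (h : HasThreeChords A H x y z) (hR : IsSide H z R) :
    #({x, y, z} ∆ R) = #R + 1 := by
  have hinter : {x, y, z} ∩ R = {z} := by
    rw [insert_inter_of_notMem fun hx ↦ h.ne₁₃ (hR.eq_of_mem hx h.notMem),
      insert_inter_of_notMem fun hy ↦ h.ne₂₃ (hR.eq_of_mem hy h.rotate.notMem),
      singleton_inter_of_mem hR.mem]
  have hcard := card_symmDiff_add_two_mul_card_inter {x, y, z} R
  rw [hinter, card_singleton, h.card_triple] at hcard
  omega

theorem isSide_symmDiff_triple_symmDiff (h : HasThreeChords A H x y z) (hT : IsEven {x, y, z})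
    (hP : IsSide H x P) (hR : IsSide H z R) : IsSide H y (P ∆ ({x, y, z} ∆ R)) := by
  refine ⟨hP.1.symmDiff (hT.symmDiff hR.1), ?_⟩
  rw [symmDiff_sdiff_distrib, symmDiff_sdiff_distrib, hP.2, hR.2, ← h.sdiff_eq, _root_.sdiff_idem,
    h.sdiff_eq]
  ext e
  simp only [mem_symmDiff, mem_insert, mem_singleton]
  grind [h.ne₁₂, h.ne₁₃, h.ne₂₃]

theorem circuitLengthsOver_pair_of_isEven (h : HasThreeChords A H x y z)
    (hT : IsEven {x, y, z}) (hxy : Crosses H x y) (hR : IsSide H z R) :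
    circuitLengthsOver A H {x, y} = {#R + 1, #(R ∆ H) + 1} := by
  obtain ⟨P, hP⟩ := h.exists_side
  rw [h.circuitLengthsOver_pair_of_crosses h.mem h.rotate.mem h.ne₁₂ hxy hP
      (h.isSide_symmDiff_triple_symmDiff hT hP hR),
    symmDiff_symmDiff_cancel_left, h.card_triple_symmDiff hR, symmDiff_assoc,
    h.card_triple_symmDiff (hR.symmDiff h.isEven)]

/-- The sum of squares forces `p + q + r` to be even, `hd` forces it to be odd. -/
theorem false_of_sum_sq_eq {p p' q q' r r' d : ℕ} (hp : p + p' = 18) (hq : q + q' = 18)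
    (hr : r + r' = 18) (hd : r + 1 + 2 * d = p + q)
    (hsq : 16 ^ 2 + (p ^ 2 + p' ^ 2) + (q ^ 2 + q' ^ 2) + (r ^ 2 + r' ^ 2) +
      ((r + 1) ^ 2 + (r' + 1) ^ 2) + ((q + 1) ^ 2 + (q' + 1) ^ 2) + ((p + 1) ^ 2 + (p' + 1) ^ 2) +
      3 ^ 2 = 1491) : False := by
  obtain ⟨a, ha⟩ := Nat.even_mul_succ_self p
  obtain ⟨b, hb⟩ := Nat.even_mul_succ_self q
  obtain ⟨c, hc⟩ := Nat.even_mul_succ_self r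
  zify at *
  rw [eq_sub_of_add_eq' hp, eq_sub_of_add_eq' hq, eq_sub_of_add_eq' hr] at hsq
  have : 2 * (a + b + c : ℤ) = 19 * (p + q + r) - 208 := by linarith
  omega

theorem not_isEven_triple (h : HasThreeChords A H x y z) (hT : IsEven {x, y, z}) (hH : #H = 16)
    (hxy : Crosses H x y) (hxz : Crosses H x z) (hyz : Crosses H y z)
    (hL : circuitLengthsOver A H {x, y, z} = {3}) : False := by
  obtain ⟨P, hP⟩ := h.exists_side
  obtain ⟨Q, hQ⟩ := h.rotate.exists_side
  have hR := h.swap_right.isSide_symmDiff_triple_symmDiff (by rwa [pair_comm]) hP hQ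
  rw [pair_comm] at hR
  have hPQ := h.card_triple_symmDiff hR
  rw [symmDiff_left_comm, symmDiff_symmDiff_cancel_left] at hPQ
  have hlengths := h.lengths_eq hP hQ hR
  rw [h.circuitLengthsOver_pair_of_isEven hT hxy hR,
    h.swap_right.circuitLengthsOver_pair_of_isEven (by rwa [pair_comm]) hxz hQ,
    h.rotate.circuitLengthsOver_pair_of_isEven (by rwa [pair_comm, Finset.insert_comm])
      hyz hP, hL, hH] at hlengths
  have hsq := congrArg (fun s : Multiset ℕ ↦ (s.map (· ^ 2)).sum) hlengths
  have hIcc : ((Icc 3 16).val.map (· ^ 2)).sum = 1491 := by decide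
  simp only [Multiset.map_add, Multiset.insert_eq_cons, Multiset.map_cons, Multiset.map_singleton,
    Multiset.sum_add, Multiset.sum_singleton, Multiset.sum_cons, hIcc] at hsq
  have hp := hP.card_add_card_symmDiff
  have hq := hQ.card_add_card_symmDiff
  have hr := hR.card_add_card_symmDiff
  rw [hH] at hp hq hr
  exact false_of_sum_sq_eq hp hq hr (hPQ ▸ card_symmDiff_add_two_mul_card_inter P Q) hsq

theorem not_pairwise_crosses (h : HasThreeChords A H x y z) (hxy : Crosses H x y)
    (hxz : Crosses H x z) (hyz : Crosses H y z) : False := by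
  have hcard := h.card_eq
  have hsum := h.sum_eq
  rw [h.card_pair_of_crosses hxy, h.swap_right.card_pair_of_crosses hxz,
    h.rotate.card_pair_of_crosses hyz] at hcard
  rw [h.sum_pair_of_crosses hxy, h.swap_right.sum_pair_of_crosses hxz,
    h.rotate.sum_pair_of_crosses hyz] at hsum
  rcases h.triple_cases with hL | ⟨F, hF, hFc, -, hL⟩ | ⟨E, hE, hL⟩ <;> rw [hL] at hcard hsum
  · rw [Multiset.card_zero] at hcard
    rw [hcard] at hsum
    exact absurd hsum (by decide)
  · rw [Multiset.card_singleton] at hcard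
    rw [hcard, Multiset.sum_singleton, show ∑ k ∈ Icc 3 16, k = 133 from rfl] at hsum
    have hF₃ : #F = 3 := by omega
    have hFT : {x, y, z} = F :=
      eq_of_subset_of_card_le (hF ▸ Finset.sdiff_subset) (by rw [h.card_triple, hF₃])
    exact h.not_isEven_triple (hFT ▸ hFc.isEven) hcard hxy hxz hyz (hF₃ ▸ hL)
  · rw [Multiset.card_pair] at hcard
    rw [Multiset.sum_pair, card_add_card_symmDiff, hE, h.card_triple, hcard] at hsum
    exact absurd hsum (by decide)

theorem false_of_disjoint_of_disjoint_symmDiff (h : HasThreeChords A H x y z) (hP : IsSide H x P)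
    (hQ : IsSide H y Q) (hR : IsSide H z R) (hPQ : Disjoint P Q) (hQR : Disjoint (Q ∆ H) R) :
    False := by
  have hPR : Disjoint P R := by
    rw [Finset.disjoint_left]
    intro e heP heR
    have heQ := Finset.disjoint_left.mp hPQ heP
    have heH : e ∈ H := by_contra fun heH ↦
      h.ne₁₃ ((hP.eq_of_mem heP heH).symm.trans (hR.eq_of_mem heR heH))
    exact Finset.disjoint_left.mp hQR ((mem_symmDiff_right_iff heH).mpr heQ) heR
  have hnot : ¬ IsCircuit (P ∆ (Q ∆ R)) :=
    not_isCircuit_symmDiff_of_disjoint hP.1 ⟨x, hP.mem⟩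
      ⟨y, (hQ.symmDiff_sdiff hR h.ne₂₃ ▸ Finset.sdiff_subset) (mem_insert_self y {z})⟩
      (Disjoint.symmDiff_right hPQ hPR)
  have hnot' : ¬ IsCircuit (P ∆ (Q ∆ R) ∆ H) := by
    have hrw : P ∆ (Q ∆ R) ∆ H = R ∆ (P ∆ (Q ∆ H)) := by
      rw [symmDiff_comm Q R, symmDiff_left_comm, symmDiff_assoc, symmDiff_assoc]
    rw [hrw]
    exact not_isCircuit_symmDiff_of_disjoint hR.1 ⟨z, hR.mem⟩
      ⟨x, (hP.symmDiff_sdiff (hQ.symmDiff h.isEven) h.ne₁₂ ▸ Finset.sdiff_subset)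
        (mem_insert_self x {y})⟩ (hPR.symm.symmDiff_right hQR.symm)
  have hL := h.circuitLengthsOver_triple (hP.1.symmDiff (hQ.1.symmDiff hR.1))
    (hP.symmDiff_symmDiff_sdiff hQ hR h.ne₁₂ h.ne₁₃ h.ne₂₃)
  rw [if_neg hnot, if_neg hnot', add_zero] at hL
  have hcard := h.card_eq
  rw [h.card_pair_of_disjoint hP hQ hPQ, h.swap_right.card_pair_of_disjoint hP hR hPR,
    h.rotate.card_pair_of_disjoint (hQ.symmDiff h.isEven) hR hQR, hL, Multiset.card_zero] at hcard
  have hsum := h.sum_eq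
  rw [hL, Multiset.sum_zero, hcard, show ∑ k ∈ Icc 3 12, k = 75 from rfl] at hsum
  have hxy := h.sum_pair_of_disjoint hP hQ hPQ
  have hxz := h.swap_right.sum_pair_of_disjoint hP hR hPR
  have hyz := h.rotate.sum_pair_of_disjoint (hQ.symmDiff h.isEven) hR hQR
  have hq := hQ.card_add_card_symmDiff
  omega

theorem false_of_pairwise_disjoint (h : HasThreeChords A H x y z) (hP : IsSide H x P)
    (hQ : IsSide H y Q) (hR : IsSide H z R) (hPQ : Disjoint P Q) (hPR : Disjoint P R)
    (hQR : Disjoint Q R) : False := by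
  have hnot : ¬ IsCircuit (P ∆ (Q ∆ R)) :=
    not_isCircuit_symmDiff_of_disjoint hP.1 ⟨x, hP.mem⟩
      ⟨y, (hQ.symmDiff_sdiff hR h.ne₂₃ ▸ Finset.sdiff_subset) (mem_insert_self y {z})⟩
      (Disjoint.symmDiff_right hPQ hPR)
  have hS := hP.symmDiff_symmDiff_sdiff hQ hR h.ne₁₂ h.ne₁₃ h.ne₂₃
  have hL := h.circuitLengthsOver_triple (hP.1.symmDiff (hQ.1.symmDiff hR.1)) hS
  rw [if_neg hnot, zero_add] at hL
  have hcard := h.card_eq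
  rw [h.card_pair_of_disjoint hP hQ hPQ, h.swap_right.card_pair_of_disjoint hP hR hPR,
    h.rotate.card_pair_of_disjoint hQ hR hQR] at hcard
  have hsum := h.sum_eq
  have hxy := h.sum_pair_of_disjoint hP hQ hPQ
  have hxz := h.swap_right.sum_pair_of_disjoint hP hR hPR
  have hyz := h.rotate.sum_pair_of_disjoint hQ hR hQR
  rw [hL] at hcard hsum
  split_ifs at hcard hsum
  · rw [Multiset.card_singleton] at hcard
    rw [Multiset.sum_singleton, hcard, show ∑ k ∈ Icc 3 13, k = 88 from rfl] at hsum
    have hE := card_add_card_symmDiff (P ∆ (Q ∆ R)) H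
    have hPQR := card_symmDiff_add_two_mul_card_inter P (Q ∆ R)
    rw [hS, h.card_triple] at hE
    rw [disjoint_iff_inter_eq_empty.mp (hPQ.symmDiff_right hPR), card_empty] at hPQR
    have hQR' := card_symmDiff_add_two_mul_card_inter Q R
    rw [disjoint_iff_inter_eq_empty.mp hQR, card_empty] at hQR'
    omega
  · rw [Multiset.card_zero] at hcard
    rw [Multiset.sum_zero, hcard, show ∑ k ∈ Icc 3 12, k = 75 from rfl] at hsum
    omega

theorem isCircuit_triple_symmDiff_of_disjoint (h : HasThreeChords A H x y z)
    (hxz : Crosses H x z) (hP : IsSide H x P) (hQ : IsSide H y Q) (hR : IsSide H z R)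
    (hPQ : Disjoint P Q) (hQR : Disjoint Q R) : IsCircuit (P ∆ (Q ∆ R) ∆ H) := by
  have hS := (symmDiff_sdiff_right _ H).trans
    (hP.symmDiff_symmDiff_sdiff hQ hR h.ne₁₂ h.ne₁₃ h.ne₂₃)
  obtain ⟨e, heH, heQ⟩ := h.exists_mem_side h.rotate.mem hQ
  obtain ⟨f, hfH, hfP, hfR⟩ := hxz.exists_mem_sdiff h.ne₁₃ h.isEven hP hR
  obtain ⟨g, hgH, hgR, hgP⟩ := hxz.symm.exists_mem_sdiff h.ne₁₃.symm h.isEven hR hP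
  have heP := Finset.disjoint_right.mp hPQ heQ
  have heR := Finset.disjoint_left.mp hQR heQ
  have hfQ := Finset.disjoint_left.mp hPQ hfP
  have hgQ := Finset.disjoint_right.mp hQR hgR
  have heE : e ∉ P ∆ (Q ∆ R) ∆ H := by simp [mem_symmDiff, *]
  have hfE : f ∉ P ∆ (Q ∆ R) ∆ H := by simp [mem_symmDiff, *]
  have hgE : g ∉ P ∆ (Q ∆ R) ∆ H := by simp [mem_symmDiff, *]
  refine h.isCircuit_of_not_subset ((hP.1.symmDiff (hQ.1.symmDiff hR.1)).symmDiff h.isEven)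
    ⟨x, (hS ▸ Finset.sdiff_subset) (mem_insert_self x {y, z})⟩ (by rw [hS, h.card_triple])
    (fun hHE ↦ heE (hHE heH)) fun w hw ↦ ?_
  rw [hS, mem_insert, mem_insert, mem_singleton] at hw
  rcases hw with rfl | rfl | rfl
  · exact h.side_not_subset hP hfP hfE hgH hgP hgE
  · exact h.side_not_subset hQ heQ heE hfH hfQ hfE
  · exact h.side_not_subset hR hgR hgE hfH hfR hfE

theorem card_eq_of_crosses_of_disjoint (h : HasThreeChords A H x y z) (hxz : Crosses H x z)
    (hP : IsSide H x P) (hQ : IsSide H y Q) (hR : IsSide H z R) (hPQ : Disjoint P Q)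
    (hQR : Disjoint Q R) : #H = 14 := by
  have hnot : ¬ IsCircuit (P ∆ (Q ∆ R)) := by
    rw [symmDiff_left_comm]
    exact not_isCircuit_symmDiff_of_disjoint hQ.1 ⟨y, hQ.mem⟩
      ⟨x, (hP.symmDiff_sdiff hR h.ne₁₃ ▸ Finset.sdiff_subset) (mem_insert_self x {z})⟩
      (hPQ.symm.symmDiff_right hQR)
  have hL := h.circuitLengthsOver_triple (hP.1.symmDiff (hQ.1.symmDiff hR.1))
    (hP.symmDiff_symmDiff_sdiff hQ hR h.ne₁₂ h.ne₁₃ h.ne₂₃)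
  rw [if_neg hnot, zero_add,
    if_pos (h.isCircuit_triple_symmDiff_of_disjoint hxz hP hQ hR hPQ hQR)] at hL
  rw [h.card_eq, h.card_pair_of_disjoint hP hQ hPQ, h.swap_right.card_pair_of_crosses hxz,
    h.rotate.card_pair_of_disjoint hQ hR hQR, hL, Multiset.card_singleton]

theorem side_subset_of_not_isCircuit (h : HasThreeChords A H x y z) (hxz : Crosses H x z)
    (hyz : Crosses H y z) (hP : IsSide H x P) (hQ : IsSide H y Q) (hR : IsSide H z R)
    (hPQ : Disjoint P Q) (hnot : ¬ IsCircuit (P ∆ (Q ∆ R) ∆ H)) : R ⊆ P ∆ (Q ∆ R) ∆ H := by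
  have hS := (symmDiff_sdiff_right _ H).trans
    (hP.symmDiff_symmDiff_sdiff hQ hR h.ne₁₂ h.ne₁₃ h.ne₂₃)
  obtain ⟨e, heH, heP, heR⟩ := hxz.exists_mem_sdiff h.ne₁₃ h.isEven hP hR
  obtain ⟨f, hfH, hfQ, hfR⟩ := hyz.exists_mem_sdiff h.ne₂₃ h.isEven hQ hR
  have heQ := Finset.disjoint_left.mp hPQ heP
  have hfP := Finset.disjoint_right.mp hPQ hfQ
  have heE : e ∉ P ∆ (Q ∆ R) ∆ H := by simp [mem_symmDiff, *]
  have hfE : f ∉ P ∆ (Q ∆ R) ∆ H := by simp [mem_symmDiff, *]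
  by_contra hRE
  obtain ⟨g, hgR, hgE⟩ := not_subset.mp hRE
  refine hnot (h.isCircuit_of_not_subset ((hP.1.symmDiff (hQ.1.symmDiff hR.1)).symmDiff h.isEven)
    ⟨x, (hS ▸ Finset.sdiff_subset) (mem_insert_self x {y, z})⟩ (by rw [hS, h.card_triple])
    (fun hHE ↦ heE (hHE heH)) fun w hw ↦ ?_)
  rw [hS, mem_insert, mem_insert, mem_singleton] at hw
  rcases hw with rfl | rfl | rfl
  · exact h.side_not_subset hP heP heE hfH hfP hfE
  · exact h.side_not_subset hQ hfQ hfE heH heQ heE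
  · exact h.side_not_subset hR hgR hgE heH heR heE

theorem card_side_eq_of_subset (h : HasThreeChords A H x y z) (hP : IsSide H x P)
    (hQ : IsSide H y Q) (hR : IsSide H z R) (hPQ : Disjoint P Q)
    (hRE : R ⊆ P ∆ (Q ∆ R) ∆ H) : #R = #(P ∩ R) + #(Q ∩ R) + 1 := by
  have hzP : z ∉ P := fun hz ↦ h.ne₁₃ (hP.eq_of_mem hz hR.notMem).symm
  have hzQ : z ∉ Q := fun hz ↦ h.ne₂₃ (hQ.eq_of_mem hz hR.notMem).symm
  have hRz : R = insert z (P ∩ R ∪ Q ∩ R) := by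
    ext e
    constructor
    · intro heR
      by_cases heH : e ∈ H
      · have heE := hRE heR
        simp only [mem_symmDiff, heR, heH, mem_insert, mem_union, mem_inter] at heE ⊢
        tauto
      · exact mem_insert.mpr (.inl (hR.eq_of_mem heR heH))
    · simp only [mem_insert, mem_union, mem_inter]
      rintro (rfl | ⟨-, heR⟩ | ⟨-, heR⟩)
      exacts [hR.mem, heR, heR]
  have hdisj : Disjoint (P ∩ R) (Q ∩ R) := hPQ.mono inter_subset_left inter_subset_left
  have hz : z ∉ P ∩ R ∪ Q ∩ R := by simp [hzP, hzQ]
  rw [← card_union_of_disjoint hdisj, ← card_insert_of_notMem hz, ← hRz]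

theorem lengths_ne_Icc {p p' q q' r r' a b b' c c' d u v : ℕ} (hp : p + p' = 17)
    (hq : q + q' = 17) (hr : r + r' = 17) (hruv : r = u + v + 1) (ha : p + q + a = 19)
    (hb : b + 2 * u = p + r) (hb' : b + b' = 19) (hc : c + 2 * v = q + r) (hc' : c + c' = 19)
    (hd : d + 2 * u = p + c) :
    ({15} + {p, p'} + {q, q'} + {r, r'} + {a} + {b, b'} + {c, c'} + {d} : Multiset ℕ) ≠
      (Icc 3 15).val := by
  intro h
  have hsum := congrArg Multiset.sum h
  simp only [Multiset.sum_add, Multiset.sum_singleton, Multiset.sum_pair, sum_val, id_eq,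
    show ∑ k ∈ Icc 3 15, k = 117 from rfl] at hsum
  -- The pairs with sum `17`, `17`, `19`, `19`, `13` would have to be `{4, 13}`, `{6, 11}`,
  -- `{5, 14}`, `{7, 12}`, `{3, 10}`, but then `p + q` is neither `9` nor `16`.
  have key : ∀ p < 18, ∀ q < 18, ∀ u < 8,
      ({15} + {p, 17 - p} + {q, 17 - q} + {8, 9} + {19 - (p + q)} +
        {p + 8 - 2 * u, 11 + 2 * u - p} + {q + 2 * u - 6, 25 - q - 2 * u} + {p + q - 6} :
          Multiset ℕ) ≠ (Icc 3 15).val := by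
    decide +kernel
  obtain rfl : p' = 17 - p := by omega
  obtain rfl : q' = 17 - q := by omega
  obtain rfl : r = 8 := by omega
  obtain rfl : r' = 9 := by omega
  obtain rfl : a = 19 - (p + q) := by omega
  obtain rfl : b = p + 8 - 2 * u := by omega
  obtain rfl : b' = 11 + 2 * u - p := by omega
  obtain rfl : c = q + 2 * u - 6 := by omega
  obtain rfl : c' = 25 - q - 2 * u := by omega
  obtain rfl : d = p + q - 6 := by omega
  exact key p (by omega) q (by omega) u (by omega) h

theorem card_ne_fifteen_of_side_subset (h : HasThreeChords A H x y z) (hxz : Crosses H x z)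
    (hyz : Crosses H y z) (hP : IsSide H x P) (hQ : IsSide H y Q) (hR : IsSide H z R)
    (hPQ : Disjoint P Q) (hRE : R ⊆ P ∆ (Q ∆ R) ∆ H)
    (hL : circuitLengthsOver A H {x, y, z} = {#(P ∆ (Q ∆ R))}) : #H ≠ 15 := by
  intro hH
  have hz := h.rotate.rotate.mem
  have hlengths := h.lengths_eq hP hQ hR
  rw [hL, h.circuitLengthsOver_pair_of_disjoint h.mem h.rotate.mem h.ne₁₂ hP hQ hPQ,
    h.circuitLengthsOver_pair_of_crosses h.mem hz h.ne₁₃ hxz hP hR,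
    h.circuitLengthsOver_pair_of_crosses h.rotate.mem hz h.ne₂₃ hyz hQ hR, hH] at hlengths
  have hp := hP.card_add_card_symmDiff
  have hq := hQ.card_add_card_symmDiff
  have hr := hR.card_add_card_symmDiff
  have hpq := h.sum_pair_of_disjoint hP hQ hPQ
  have hpr := card_symmDiff_add_two_mul_card_inter P R
  have hqr := card_symmDiff_add_two_mul_card_inter Q R
  have hpqr := card_symmDiff_add_two_mul_card_inter P (Q ∆ R)
  have hpr' := card_add_card_symmDiff (P ∆ R) H
  have hqr' := card_add_card_symmDiff (Q ∆ R) H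
  rw [h.circuitLengthsOver_pair_of_disjoint h.mem h.rotate.mem h.ne₁₂ hP hQ hPQ,
    Multiset.sum_singleton] at hpq
  rw [← inf_eq_inter, inf_symmDiff_distrib_left, inf_eq_inter, inf_eq_inter,
    disjoint_iff_inter_eq_empty.mp hPQ, ← bot_eq_empty, bot_symmDiff] at hpqr
  rw [hP.symmDiff_sdiff hR h.ne₁₃, Finset.card_pair h.ne₁₃] at hpr'
  rw [hQ.symmDiff_sdiff hR h.ne₂₃, Finset.card_pair h.ne₂₃] at hqr'
  rw [hH] at hp hq hr hpq hpr' hqr'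
  exact lengths_ne_Icc hp hq hr (h.card_side_eq_of_subset hP hQ hR hPQ hRE) hpq hpr hpr' hqr hqr'
    hpqr hlengths

theorem card_ne_fifteen (h : HasThreeChords A H x y z) (hP : IsSide H x P)
    (hQ : IsSide H y Q) (hPQ : Disjoint P Q) (hxz : Crosses H x z) (hyz : Crosses H y z)
    (hF : F \ H = {x, y, z}) (hFc : IsCircuit F) (hnot : ¬ IsCircuit (F ∆ H))
    (hL : circuitLengthsOver A H {x, y, z} = {#F}) : #H ≠ 15 := by
  have hR : IsSide H z (P ∆ (Q ∆ F)) := by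
    refine ⟨hP.1.symmDiff (hQ.1.symmDiff hFc.isEven), ?_⟩
    rw [symmDiff_sdiff_distrib, symmDiff_sdiff_distrib, hP.2, hQ.2, hF]
    ext e
    simp only [mem_symmDiff, mem_insert, mem_singleton]
    grind [h.ne₁₂, h.ne₁₃, h.ne₂₃]
  set R := P ∆ (Q ∆ F) with hRF
  have hFR : F = P ∆ (Q ∆ R) := by
    rw [hRF, symmDiff_left_comm Q P, symmDiff_symmDiff_cancel_left, symmDiff_symmDiff_cancel_left]
  rw [hFR] at hnot hL
  exact h.card_ne_fifteen_of_side_subset hxz hyz hP hQ hR hPQ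
    (h.side_subset_of_not_isCircuit hxz hyz hP hQ hR hPQ hnot) hL

theorem card_eq_of_not_crosses_of_crosses (h : HasThreeChords A H x y z)
    (hxy : ¬ Crosses H x y) (hxz : Crosses H x z) (hyz : Crosses H y z) : #H = 14 := by
  simp only [Crosses, not_forall, not_not] at hxy
  obtain ⟨P, Q, hP, hQ, hPQ⟩ := hxy
  have hcard := h.card_eq
  rw [h.card_pair_of_disjoint hP hQ hPQ, h.swap_right.card_pair_of_crosses hxz,
    h.rotate.card_pair_of_crosses hyz] at hcard
  rcases h.triple_cases with hL | ⟨F, hF, hFc, hnot, hL⟩ | ⟨E, hE, hL⟩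
  · rw [hcard, hL, Multiset.card_zero]
  · rw [hL, Multiset.card_singleton] at hcard
    exact (h.card_ne_fifteen hP hQ hPQ hxz hyz hF hFc hnot hL hcard).elim
  · rw [hL, Multiset.card_pair] at hcard
    have hxy := h.circuitLengthsOver_pair_of_disjoint h.mem h.rotate.mem h.ne₁₂ hP hQ hPQ
    have hcircuit := h.isCircuit_symmDiff_of_disjoint h.mem h.rotate.mem h.ne₁₂ hP hQ hPQ
    have hsub := symmDiff_subset_union.trans
      (union_subset (h.symmDiff_side_subset h.mem h.rotate.mem hP hQ) h.subset)
    have hlong := h.three_le_card _ hsub hcircuit.nonempty hcircuit.isEven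
    have hsum := h.sum_eq
    rw [h.swap_right.sum_pair_of_crosses hxz, h.rotate.sum_pair_of_crosses hyz, hL, hxy,
      Multiset.sum_singleton, Multiset.sum_pair, card_add_card_symmDiff, hE, h.card_triple,
      hcard, show ∑ k ∈ Icc 3 16, k = 133 from rfl] at hsum
    omega

theorem card_eq_of_not_crosses (h : HasThreeChords A H x y z) (hxy : ¬ Crosses H x y)
    (hyz : ¬ Crosses H y z) : #H = 14 := by
  simp only [Crosses, not_forall, not_not] at hxy hyz
  obtain ⟨P, Q, hP, hQ, hPQ⟩ := hxy
  obtain ⟨Q', R, hQ', hR, hQR⟩ := hyz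
  rcases h.side_eq_or_eq_symmDiff hQ hQ' with rfl | rfl
  swap
  · exact (h.false_of_disjoint_of_disjoint_symmDiff hP hQ hR hPQ hQR).elim
  by_cases hxz : Crosses H x z
  · exact h.card_eq_of_crosses_of_disjoint hxz hP hQ hR hPQ hQR
  simp only [Crosses, not_forall, not_not] at hxz
  obtain ⟨P', R', hP', hR', hPR⟩ := hxz
  exfalso
  rcases h.side_eq_or_eq_symmDiff hP hP' with rfl | rfl <;>
    rcases h.side_eq_or_eq_symmDiff hR hR' with rfl | rfl
  · exact h.false_of_pairwise_disjoint hP hQ hR hPQ hPR hQR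
  · exact h.rotate.false_of_disjoint_of_disjoint_symmDiff hQ hR hP hQR hPR.symm
  · exact h.swap_left.false_of_disjoint_of_disjoint_symmDiff hQ hP hR hPQ.symm hPR
  · obtain ⟨e, heH, heQ⟩ := h.exists_mem_side h.rotate.mem hQ
    have heP := (mem_symmDiff_right_iff heH).mpr (Finset.disjoint_right.mp hPQ heQ)
    have heR := (mem_symmDiff_right_iff heH).mpr (Finset.disjoint_left.mp hQR heQ)
    exact Finset.disjoint_left.mp hPR heP heR

theorem card_eq_fourteen (h : HasThreeChords A H x y z) : #H = 14 := by
  by_cases hxy : Crosses H x y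
  · by_cases hxz : Crosses H x z
    · by_cases hyz : Crosses H y z
      · exact (h.not_pairwise_crosses hxy hxz hyz).elim
      · exact h.rotate.card_eq_of_not_crosses_of_crosses hyz hxy.symm hxz.symm
    · by_cases hyz : Crosses H y z
      · exact h.swap_right.card_eq_of_not_crosses_of_crosses hxz hxy hyz.symm
      · exact h.swap_right.card_eq_of_not_crosses hxz fun hzy ↦ hyz hzy.symm
  · by_cases hyz : Crosses H y z
    · by_cases hxz : Crosses H x z
      · exact h.card_eq_of_not_crosses_of_crosses hxy hxz hyz
      · exact h.swap_left.card_eq_of_not_crosses (fun hyx ↦ hxy hyx.symm) hxz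
    · exact h.card_eq_of_not_crosses hxy hyz

end HasThreeChords

end UniqueLengths

end Chords

theorem upc_orders_with_at_most_three_chords {V : Type*} [Fintype V] (G : SimpleGraph V)
    (hG : IsRPancyclic G 1) (he : G.edgeSet.ncard ≤ Fintype.card V + 3) :
    Fintype.card V ∈ ({3, 5, 8, 14} : Set ℕ) := by
  classical
  obtain ⟨H, hspan, hV⟩ := exists_isSpanningCircuit G.coe_edgeFinset hG.1
    (by rw [hG.2 _ hG.1 le_rfl]; exact one_ne_zero)
  have h : HasUniqueLengths G.edgeFinset H :=
    ⟨hspan, hV ▸ circuitLengths_eq_Icc G.coe_edgeFinset hG⟩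
  have hchords : (G.edgeFinset \ H).card ≤ 3 := by
    rw [← coe_edgeFinset, Set.ncard_coe_finset] at he
    rw [Finset.card_sdiff_of_subset h.subset]
    omega
  rw [← hV]
  interval_cases hcard : (G.edgeFinset \ H).card
  · exact .inl (h.card_eq_three (Finset.card_eq_zero.mp hcard))
  · obtain ⟨x, hS⟩ := Finset.card_eq_one.mp hcard
    exact .inr (.inl (h.card_eq_five hS))
  · obtain ⟨x, y, hxy, hS⟩ := Finset.card_eq_two.mp hcard
    exact .inr (.inr (.inl (h.card_eq_eight hxy hS)))
  · obtain ⟨x, y, z, hxy, hxz, hyz, hS⟩ := Finset.card_eq_three.mp hcard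
    exact .inr (.inr (.inr (HasThreeChords.card_eq_fourteen ⟨h, hS, hxy, hxz, hyz⟩)))
end

section
/- There is no (2)-pancyclic graph on 9 vertices and no (2)-pancyclic graph on 10 vertices; moreover, there is no (2)-pancyclic graph on fewer than 8 vertices (the two (2)-pancyclic graphs of order 8 are the smallest). -/
open SimpleGraph

/-!
The edge sets meeting every vertex an even number of times are closed under symmetric difference,
and the minimal nonempty ones are the edge sets of the cycles. If a chord `e` is adjoined to a graph
containing a Hamiltonian cycle, then `e` and a path of that cycle form one even set through `e`, the
others are its symmetric differences with the old even sets, and the new cycles are those among them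
that contain no old nonempty even set. The lengths of all cycles of a graph can therefore be
maintained on bit masks while chords are adjoined one by one, and an exhaustive search, abandoning a
set of chords as soon as some length occurs too often, settles each small order. By the symmetry of
the cycle one may prescribe the starting point of a shortest chord, whose length also bounds the
lengths of the other chords from below.
-/

namespace Pancyclic

open scoped symmDiff

section Mask

variable {E : Type*} {pos : E → ℕ} {F F' : Finset E}

/-- The code of a finite set `F` in which `e` has position `pos e`. An element owns four bits, of
which only the lowest is used, so that the residue modulo `15` is the number of elements. -/
def mask (pos : E → ℕ) (F : Finset E) : ℕ := ∑ e ∈ F, 16 ^ pos e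

lemma testBit_mask (h : Set.InjOn pos F) (i : ℕ) :
    (mask pos F).testBit i ↔ ∃ e ∈ F, 4 * pos e = i := by
  have hmask : mask pos F = ∑ j ∈ F.image (4 * pos ·), 2 ^ j := by
    rw [Finset.sum_image fun a ha b hb hab => h ha hb (by lia)]
    exact Finset.sum_congr rfl fun e _ => (pow_mul 2 4 (pos e)).symm
  rw [hmask, ← Nat.mem_bitIndices, ← List.mem_toFinset, Finset.toFinset_bitIndices_sum_two_pow,
    Finset.mem_image]

lemma mask_mod (h : F.card < 15) : mask pos F % 15 = F.card := by
  rw [mask, Finset.sum_nat_mod]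
  simp [Nat.pow_mod, Nat.mod_eq_of_lt h]

lemma testBit_mask_pos {S : Finset E} (h : Set.InjOn pos S) (hF : F ⊆ S) {e : E} (he : e ∈ S) :
    (mask pos F).testBit (4 * pos e) ↔ e ∈ F := by
  rw [testBit_mask (h.mono (Finset.coe_subset.2 hF))]
  refine ⟨?_, fun heF => ⟨e, heF, rfl⟩⟩
  rintro ⟨a, ha, hpos⟩
  rwa [← h (hF ha) he (by lia)]

lemma mask_land_eq_left_iff {S : Finset E} (h : Set.InjOn pos S) (hF : F ⊆ S) (hF' : F' ⊆ S) :
    mask pos F &&& mask pos F' = mask pos F ↔ F ⊆ F' := by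
  constructor
  · intro hland e he
    rw [← testBit_mask_pos h hF' (hF he)]
    have hbit := (testBit_mask_pos h hF (hF he)).2 he
    rw [← hland, Nat.testBit_land, Bool.and_eq_true] at hbit
    exact hbit.2
  · intro hsub
    refine Nat.eq_of_testBit_eq fun i => ?_
    rw [Nat.testBit_land, Bool.and_eq_left_iff_imp,
      testBit_mask (h.mono (Finset.coe_subset.2 hF)),
      testBit_mask (h.mono (Finset.coe_subset.2 hF'))]
    exact fun ⟨e, he, hei⟩ => ⟨e, hsub he, hei⟩

variable [DecidableEq E]

lemma mask_insert {e : E} (he : e ∉ F) : mask pos (insert e F) = mask pos F + 16 ^ pos e := by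
  rw [mask, Finset.sum_insert he, add_comm, mask]

lemma mask_update_of_notMem {e : E} (he : e ∉ F) (t : ℕ) :
    mask (Function.update pos e t) F = mask pos F :=
  Finset.sum_congr rfl fun a ha => by
    rw [Function.update_of_ne (ne_of_mem_of_not_mem ha he)]

lemma mask_xor {S : Finset E} (h : Set.InjOn pos S) (hF : F ⊆ S) (hF' : F' ⊆ S) :
    mask pos F ^^^ mask pos F' = mask pos (F ∆ F') := by
  have hsub : F ∆ F' ⊆ S := symmDiff_le_sup.trans (Finset.union_subset hF hF')
  refine Nat.eq_of_testBit_eq fun i => ?_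
  rw [Nat.testBit_xor]
  by_cases hi : ∃ e ∈ S, 4 * pos e = i
  · obtain ⟨e, he, rfl⟩ := hi
    rw [Bool.eq_iff_iff, testBit_mask_pos h hsub he, Finset.mem_symmDiff,
      ← testBit_mask_pos h hF he, ← testBit_mask_pos h hF' he]
    cases (mask pos F).testBit (4 * pos e) <;> cases (mask pos F').testBit (4 * pos e) <;> simp
  · have hoff {X : Finset E} (hX : X ⊆ S) : (mask pos X).testBit i = false := by
      rw [← Bool.not_eq_true, testBit_mask (h.mono (Finset.coe_subset.2 hX))]
      exact fun ⟨e, he, hei⟩ => hi ⟨e, hX he, hei⟩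
    rw [hoff hF, hoff hF', hoff hsub, Bool.xor_false]

end Mask

/-- A collection of finite subsets of `E` closed under symmetric difference: unless it is empty, a
subspace of the vector space of finite subsets of `E` over the field with two elements. Its elements
are the members of the space. -/
structure BinarySpace (E : Type*) [DecidableEq E] where
  Mem : Finset E → Prop
  symmDiff_mem : ∀ {F F' : Finset E}, Mem F → Mem F' → Mem (F ∆ F')

namespace BinarySpace

variable {E : Type*} [DecidableEq E] (B : BinarySpace E) {S C F p : Finset E} {e : E}

/-- A circuit is a minimal nonempty member. -/
def IsCircuit (C : Finset E) : Prop := Minimal (fun F => F.Nonempty ∧ B.Mem F) C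

open scoped Classical in
/-- The nonempty members contained in `S`. -/
noncomputable def members (S : Finset E) : Finset (Finset E) :=
  {F ∈ S.powerset | F.Nonempty ∧ B.Mem F}

open scoped Classical in
/-- The circuits contained in `S`. -/
noncomputable def circuits (S : Finset E) : Finset (Finset E) := {C ∈ S.powerset | B.IsCircuit C}

/-- The sizes of the circuits contained in `S`, with multiplicity. -/
noncomputable def circuitSizes (S : Finset E) : Multiset ℕ := (B.circuits S).val.map Finset.card

/-- The members contained in `insert e S` that use `e`. -/
noncomputable def newMembers (S : Finset E) (e : E) : Finset (Finset E) :=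
  {F ∈ B.members (insert e S) | e ∈ F}

/-- The circuits contained in `insert e S` that use `e`. -/
noncomputable def newCircuits (S : Finset E) (e : E) : Finset (Finset E) :=
  {C ∈ B.circuits (insert e S) | e ∈ C}

variable {B}

lemma mem_members : F ∈ B.members S ↔ F ⊆ S ∧ F.Nonempty ∧ B.Mem F := by
  simp [members]

lemma mem_circuits : C ∈ B.circuits S ↔ C ⊆ S ∧ B.IsCircuit C := by
  simp [circuits]

lemma mem_newMembers : F ∈ B.newMembers S e ↔ (F ⊆ insert e S ∧ F.Nonempty ∧ B.Mem F) ∧ e ∈ F := by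
  rw [newMembers, Finset.mem_filter, mem_members]

lemma mem_newCircuits : C ∈ B.newCircuits S e ↔ (C ⊆ insert e S ∧ B.IsCircuit C) ∧ e ∈ C := by
  rw [newCircuits, Finset.mem_filter, mem_circuits]

lemma circuits_mono {A : Finset E} (h : S ⊆ A) : B.circuits S ⊆ B.circuits A := fun _ hC =>
  mem_circuits.2 ⟨(mem_circuits.1 hC).1.trans h, (mem_circuits.1 hC).2⟩

lemma circuitSizes_mono {A : Finset E} (h : S ⊆ A) : B.circuitSizes S ≤ B.circuitSizes A :=
  Multiset.map_le_map (Finset.val_le_iff.2 (circuits_mono h))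

lemma IsCircuit.eq_of_subset (hC : B.IsCircuit C) (hne : F.Nonempty) (hF : B.Mem F)
    (hFC : F ⊆ C) : F = C :=
  Minimal.eq_of_le hC ⟨hne, hF⟩ hFC

lemma members_of_isCircuit (hC : B.IsCircuit C) : B.members C = {C} := by
  ext F
  rw [mem_members, Finset.mem_singleton]
  refine ⟨fun ⟨hFC, hF⟩ => hC.eq_of_subset hF.1 hF.2 hFC, ?_⟩
  rintro rfl
  exact ⟨subset_rfl, hC.prop⟩

lemma circuits_of_isCircuit (hC : B.IsCircuit C) : B.circuits C = {C} := by
  ext F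
  rw [mem_circuits, Finset.mem_singleton]
  refine ⟨fun ⟨hFC, hF⟩ => hC.eq_of_subset hF.prop.1 hF.prop.2 hFC, ?_⟩
  rintro rfl
  exact ⟨subset_rfl, hC⟩

lemma subset_insert_and_notMem_iff (he : e ∉ S) : F ⊆ insert e S ∧ e ∉ F ↔ F ⊆ S :=
  ⟨fun ⟨hF, heF⟩ => (Finset.subset_insert_iff_of_notMem heF).1 hF,
    fun hF => ⟨hF.trans (Finset.subset_insert e S), fun heF => he (hF heF)⟩⟩

lemma members_insert_val (he : e ∉ S) :
    (B.members (insert e S)).val = (B.newMembers S e).val + (B.members S).val := by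
  have hold : (B.members (insert e S)).filter (e ∉ ·) = B.members S := by
    ext F
    rw [Finset.mem_filter, mem_members, mem_members, ← subset_insert_and_notMem_iff he]
    tauto
  rw [← hold, newMembers, Finset.filter_val, Finset.filter_val, Multiset.filter_add_not]

lemma circuitSizes_insert (he : e ∉ S) :
    B.circuitSizes (insert e S) = (B.newCircuits S e).val.map Finset.card + B.circuitSizes S := by
  have hold : (B.circuits (insert e S)).filter (e ∉ ·) = B.circuits S := by
    ext F
    rw [Finset.mem_filter, mem_circuits, mem_circuits, ← subset_insert_and_notMem_iff he]
    tauto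
  rw [circuitSizes, circuitSizes, ← Multiset.map_add, ← hold, newCircuits, Finset.filter_val,
    Finset.filter_val, Multiset.filter_add_not]

lemma newMembers_eq (hp : p ⊆ S) (he : e ∉ S) (hmem : B.Mem (insert e p)) :
    B.newMembers S e = insert (insert e p) ((B.members S).image (insert e p ∆ ·)) := by
  have hpe : insert e p ⊆ insert e S := Finset.insert_subset_insert e hp
  ext F
  simp only [newMembers, Finset.mem_filter, mem_members, Finset.mem_insert, Finset.mem_image]
  constructor
  · rintro ⟨⟨hF, -, hFmem⟩, heF⟩
    rcases eq_or_ne F (insert e p) with rfl | hFp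
    · exact Or.inl rfl
    · refine Or.inr ⟨insert e p ∆ F, ⟨?_, ?_, B.symmDiff_mem hmem hFmem⟩,
        symmDiff_symmDiff_cancel_left _ _⟩
      · rw [← subset_insert_and_notMem_iff he]
        refine ⟨symmDiff_le_sup.trans (Finset.union_subset hpe hF), ?_⟩
        simp [Finset.mem_symmDiff, heF]
      · exact Finset.symmDiff_nonempty.2 hFp.symm
  · rintro (rfl | ⟨F, ⟨hF, -, hFmem⟩, rfl⟩)
    · exact ⟨⟨hpe, Finset.insert_nonempty e p, hmem⟩, Finset.mem_insert_self e p⟩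
    · have heF : e ∈ insert e p ∆ F :=
        Finset.mem_symmDiff.2 (Or.inl ⟨Finset.mem_insert_self e p, fun h => he (hF h)⟩)
      exact ⟨⟨symmDiff_le_sup.trans (Finset.union_subset hpe
        (hF.trans (Finset.subset_insert e S))), ⟨e, heF⟩, B.symmDiff_mem hmem hFmem⟩, heF⟩

lemma newMembers_val (hp : p ⊆ S) (he : e ∉ S) (hmem : B.Mem (insert e p)) :
    (B.newMembers S e).val = insert e p ::ₘ (B.members S).val.map (insert e p ∆ ·) := by
  rw [newMembers_eq hp he hmem, Finset.insert_val_of_notMem,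
    Finset.image_val_of_injOn (symmDiff_right_injective _).injOn]
  intro hself
  obtain ⟨F, hF, hFp⟩ := Finset.mem_image.1 hself
  exact (mem_members.1 hF).2.1.ne_empty (symmDiff_eq_left.1 hFp)

lemma newCircuits_eq_filter (he : e ∉ S) :
    B.newCircuits S e = {C ∈ B.newMembers S e | ∀ F ∈ B.members S, ¬ F ⊆ C} := by
  ext C
  rw [Finset.mem_filter, mem_newCircuits, mem_newMembers]
  constructor
  · rintro ⟨⟨hC, hcirc⟩, heC⟩
    refine ⟨⟨⟨hC, hcirc.prop⟩, heC⟩, fun F hF hFC => he ?_⟩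
    obtain ⟨hFS, hne, hmem⟩ := mem_members.1 hF
    exact hFS (hcirc.eq_of_subset hne hmem hFC ▸ heC)
  · rintro ⟨⟨⟨hC, hne, hCmem⟩, heC⟩, hfree⟩
    refine ⟨⟨hC, ⟨hne, hCmem⟩, fun F ⟨hFne, hF⟩ hFC => ?_⟩, heC⟩
    have eq_empty {F : Finset E} (hF : B.Mem F) (hFC : F ⊆ C) (heF : e ∉ F) : F = ∅ := by
      by_contra hFne
      refine hfree F (mem_members.2 ⟨?_, Finset.nonempty_of_ne_empty hFne, hF⟩) hFC
      exact (subset_insert_and_notMem_iff he).1 ⟨hFC.trans hC, heF⟩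
    have heF : e ∈ F := by
      by_contra heF
      exact hFne.ne_empty (eq_empty hF hFC heF)
    have hcompl : C ∆ F = ∅ := eq_empty (B.symmDiff_mem hCmem hF)
      (symmDiff_le_sup.trans (Finset.union_subset subset_rfl hFC))
      (by simp [Finset.mem_symmDiff, heC, heF])
    exact (symmDiff_eq_bot.1 hcompl).le

end BinarySpace

section Search

/-- Application of `k` to `n`, written so that the kernel evaluates `n` to a literal first. Without
it, unevaluated terms are copied and evaluated again in every branch of the search. -/
def force (n : ℕ) (k : ℕ → Bool) : Bool := Nat.rec (k 0) (fun m _ => k (Nat.succ m)) n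

/-- Application of `k` to `l` after evaluating `l` and its entries, as for `force`. -/
def forceList (l : List ℕ) (k : List ℕ → Bool) : Bool :=
  List.rec (motive := fun _ => (List ℕ → Bool) → Bool) (fun k => k [])
    (fun a _ ih k => force a fun a' => ih fun l' => k (a' :: l')) l k

/-- Whether one of the sets with masks `M` is contained in the set with mask `m`. -/
def containsAny (m : ℕ) (M : List ℕ) : Bool :=
  List.rec false (fun y _ ih => Bool.rec ih true (Nat.beq (Nat.land y m) y)) M

/-- The sizes of the circuits among the new members with masks `new`, when `old` lists the masks of
the old members. -/
def newSizes (old new : List ℕ) : List ℕ :=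
  (new.filter fun m => !containsAny m old).map fun m => Nat.mod m 15

/-- Removes the entries of the first list from the second one and passes the rest on to `k`. The
value is `true` if some entry is not available. -/
def spend : List ℕ → List ℕ → (List ℕ → Bool) → Bool
  | [], rest, k => k rest
  | a :: as, rest, k => force a fun a =>
      !(rest.any (Nat.beq a)) || forceList (rest.eraseP (Nat.beq a)) fun rest' => spend as rest' k

/-- Adjoins an element to the current set, where `f` is the mask of a member consisting of the new
element and old ones, `M` lists the masks of the old members, and `rest` the sizes of the circuits
that are still to appear. The new state is passed on to `k`. -/
def adjoin (f : ℕ) (M rest : List ℕ) (k : List ℕ → List ℕ → Bool) : Bool :=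
  forceList (f :: M.map (Nat.xor f)) fun new =>
    spend (newSizes M new) rest fun rest' => k (new ++ M) rest'

/-- Whether no set obtained by adjoining some of the candidates has precisely the circuits of sizes
`rest` in addition to those already there. A candidate is given by the mask of the old elements that
complete it to a member, and `b` is the power of `16` for the next free position. -/
def search : List ℕ → ℕ → List ℕ → List ℕ → Bool
  | [], _, _, rest => !rest.isEmpty
  | p :: ps, b, M, rest => search ps b M rest && force (Nat.mul 16 b) fun b' =>
      force (Nat.add p b) fun f => adjoin f M rest (search ps b')

lemma force_eq (n : ℕ) (k : ℕ → Bool) : force n k = k n := by cases n <;> rfl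

lemma forceList_eq (l : List ℕ) (k : List ℕ → Bool) : forceList l k = k l := by
  induction l generalizing k with
  | nil => rfl
  | cons a l ih =>
    change force a (fun a' => forceList l fun l' => k (a' :: l')) = k (a :: l)
    rw [force_eq, ih]

lemma containsAny_iff (m : ℕ) (M : List ℕ) : containsAny m M ↔ ∃ y ∈ M, y &&& m = y := by
  induction M with
  | nil => simp [containsAny]
  | cons y M ih =>
    have hcons : containsAny m (y :: M) = (Nat.beq (y &&& m) y || containsAny m M) := by
      change Bool.rec (motive := fun _ => Bool) (containsAny m M) true (Nat.beq (y &&& m) y) = _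
      cases Nat.beq (y &&& m) y <;> rfl
    rw [hcons, Bool.or_eq_true, ih, Nat.beq_eq, List.exists_mem_cons_iff]

lemma exists_of_spend {as rest : List ℕ} {k : List ℕ → Bool} (h : spend as rest k)
    (hle : (as : Multiset ℕ) ≤ rest) :
    ∃ rest' : List ℕ, (rest : Multiset ℕ) = as + rest' ∧ k rest' := by
  induction as generalizing rest with
  | nil => exact ⟨rest, (zero_add _).symm, h⟩
  | cons a as ih =>
    have ha : a ∈ rest := Multiset.mem_of_le hle (Multiset.mem_cons_self a as)
    have hany : rest.any (Nat.beq a) := List.any_eq_true.2 ⟨a, ha, Nat.beq_refl a⟩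
    have herase : rest.eraseP (Nat.beq a) = rest.erase a := by
      rw [List.erase_eq_eraseP]
      exact congrArg (rest.eraseP ·) (funext fun x => Bool.eq_iff_iff.2 (by simp))
    rw [spend, force_eq, forceList_eq, hany, Bool.not_true, Bool.false_or, herase] at h
    have hle' : (as : Multiset ℕ) ≤ (rest.erase a : List ℕ) := by
      rw [← Multiset.coe_erase]
      exact (Multiset.erase_cons_head a as).symm.trans_le (Multiset.erase_le_erase a hle)
    obtain ⟨rest', hrest, hk⟩ := ih h hle'
    refine ⟨rest', ?_, hk⟩
    rw [← Multiset.cons_coe, Multiset.cons_add, ← hrest, ← Multiset.coe_erase,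
      Multiset.cons_erase ha]

end Search

section Soundness

open BinarySpace

variable {E : Type*} [DecidableEq E] {B : BinarySpace E} {A S p : Finset E} {pos : E → ℕ} {t : ℕ}
  {M rest : List ℕ} {e : E}

/-- The lists `M` and `rest` form the state of the search for `A` that has reached the subset `S`,
whose elements have the positions `pos` below `t`. -/
structure IsState (B : BinarySpace E) (A S : Finset E) (pos : E → ℕ) (t : ℕ) (M rest : List ℕ) :
    Prop where
  injOn : Set.InjOn pos S
  pos_lt : ∀ e ∈ S, pos e < t
  masks : (M : Multiset ℕ) = (B.members S).val.map (mask pos)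
  sizes : (rest : Multiset ℕ) + B.circuitSizes S = B.circuitSizes A

lemma injOn_update (h : Set.InjOn pos S) (hlt : ∀ e ∈ S, pos e < t) (he : e ∉ S) :
    Set.InjOn (Function.update pos e t) (insert e S : Finset E) := by
  have hne : ∀ a ∈ S, a ≠ e := fun a ha => ne_of_mem_of_not_mem ha he
  rw [Finset.coe_insert, Set.injOn_insert (by exact_mod_cast he)]
  refine ⟨h.congr fun a ha => (Function.update_of_ne (hne a ha) _ _).symm, ?_⟩
  rintro ⟨a, ha, hat⟩
  rw [Function.update_self, Function.update_of_ne (hne a ha)] at hat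
  exact (hlt a ha).ne hat

lemma coe_newSizes {new : List ℕ} (he : e ∉ S) (hpos : Set.InjOn pos (insert e S : Finset E))
    (hcard : ∀ C ∈ B.newCircuits S e, C.card < 15)
    (hM : (M : Multiset ℕ) = (B.members S).val.map (mask pos))
    (hnew : (new : Multiset ℕ) = (B.newMembers S e).val.map (mask pos)) :
    (newSizes M new : Multiset ℕ) = (B.newCircuits S e).val.map Finset.card := by
  have hfree : ∀ F ∈ (B.newMembers S e).val,
      containsAny (mask pos F) M = false ↔ ∀ F' ∈ B.members S, ¬ F' ⊆ F := by
    intro F hF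
    have hsub {F' : Finset E} (hF' : F' ∈ B.members S) :
        mask pos F' &&& mask pos F = mask pos F' ↔ F' ⊆ F :=
      mask_land_eq_left_iff hpos ((mem_members.1 hF').1.trans (Finset.subset_insert e S))
        (mem_newMembers.1 hF).1.1
    rw [← Bool.not_eq_true, containsAny_iff, not_exists]
    simp only [← Multiset.mem_coe, hM, Multiset.mem_map, Finset.mem_val]
    grind
  calc (newSizes M new : Multiset ℕ)
      = ((new : Multiset ℕ).filter fun m => containsAny m M = false).map (Nat.mod · 15) := by
        rw [Multiset.filter_coe, Multiset.map_coe, newSizes]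
        simp
    _ = (B.newCircuits S e).val.map fun C => mask pos C % 15 := by
        rw [hnew, Multiset.filter_map, Multiset.map_map, newCircuits_eq_filter he,
          Finset.filter_val, ← Multiset.filter_congr hfree]
        rfl
    _ = (B.newCircuits S e).val.map Finset.card :=
        Multiset.map_congr rfl fun C hC => mask_mod (hcard C hC)

theorem IsState.adjoin (h : IsState B A S pos t M rest) (hcard : ∀ k ∈ B.circuitSizes A, k < 15)
    (hSA : insert e S ⊆ A) (he : e ∉ S) (hp : p ⊆ S) (hmem : B.Mem (insert e p))
    {k : List ℕ → List ℕ → Bool} (hk : adjoin (mask pos p + 16 ^ t) M rest k) :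
    ∃ M' rest', IsState B A (insert e S) (Function.update pos e t) (t + 1) M' rest' ∧
      k M' rest' := by
  set pos' := Function.update pos e t
  have hpos' : Set.InjOn pos' (insert e S : Finset E) := injOn_update h.injOn h.pos_lt he
  have hold : (M : Multiset ℕ) = (B.members S).val.map (mask pos') := by
    rw [h.masks]
    exact Multiset.map_congr rfl fun F hF =>
      (mask_update_of_notMem (fun heF => he ((mem_members.1 hF).1 heF)) t).symm
  have hf : mask pos p + 16 ^ t = mask pos' (insert e p) := by
    have hep : e ∉ p := fun hep => he (hp hep)
    rw [mask_insert hep, mask_update_of_notMem hep, show pos' e = t from Function.update_self ..]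
  set new := mask pos' (insert e p) :: M.map (Nat.xor (mask pos' (insert e p)))
  have hnew : (new : Multiset ℕ) = (B.newMembers S e).val.map (mask pos') := by
    rw [newMembers_val hp he hmem, Multiset.map_cons, Multiset.map_map, ← Multiset.cons_coe,
      ← Multiset.map_coe, hold, Multiset.map_map]
    refine congrArg _ (Multiset.map_congr rfl fun F hF => ?_)
    exact mask_xor hpos' (Finset.insert_subset_insert e hp)
      ((mem_members.1 hF).1.trans (Finset.subset_insert e S))
  have hsizes : (newSizes M new : Multiset ℕ) = (B.newCircuits S e).val.map Finset.card := by
    refine coe_newSizes he hpos' (fun C hC => hcard _ ?_) hold hnew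
    exact Multiset.mem_map_of_mem _ (circuits_mono hSA (Finset.mem_filter.1 hC).1)
  have hle : (newSizes M new : Multiset ℕ) ≤ rest := by
    have := circuitSizes_mono (B := B) hSA
    rwa [circuitSizes_insert he, ← h.sizes, ← hsizes, add_le_add_iff_right] at this
  rw [hf, Pancyclic.adjoin, forceList_eq] at hk
  obtain ⟨rest', hrest, hk⟩ := exists_of_spend hk hle
  refine ⟨new ++ M, rest', ⟨hpos', ?_, ?_, ?_⟩, hk⟩
  · intro a ha
    rcases Finset.mem_insert.1 ha with rfl | ha
    · simp [pos']
    · simpa [pos', ne_of_mem_of_not_mem ha he] using (h.pos_lt a ha).trans (Nat.lt_succ_self t)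
  · rw [members_insert_val he, Multiset.map_add, ← hnew, ← hold, Multiset.coe_add]
  · rw [circuitSizes_insert he, ← hsizes, ← h.sizes, hrest]
    abel

theorem IsState.not_search {ι : Type*} {elt : ι → E} {old : ι → Finset E} {g : ι → ℕ}
    (hcard : ∀ k ∈ B.circuitSizes A, k < 15) (es : List ι) (h : IsState B A S pos t M rest)
    (hSA : S ⊆ A) (hA : ∀ a ∈ A, a ∉ S → ∃ i ∈ es, elt i = a)
    (hold : ∀ i ∈ es, elt i ∈ A → elt i ∉ S →
      old i ⊆ S ∧ B.Mem (insert (elt i) (old i)) ∧ mask pos (old i) = g i) :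
    ¬ search (es.map g) (16 ^ t) M rest := by
  induction es generalizing S pos t M rest with
  | nil =>
    have hSA' : S = A := hSA.antisymm fun a ha => by
      by_contra haS
      simpa using hA a ha haS
    have hrest : (rest : Multiset ℕ) = 0 := by simpa [hSA'] using h.sizes
    simp [search, (Multiset.coe_eq_zero rest).1 hrest]
  | cons i es ih =>
    rw [List.map_cons, search, force_eq, force_eq, Bool.and_eq_true]
    rintro ⟨hskip, hadjoin⟩
    obtain ⟨hi_old, hold⟩ := List.forall_mem_cons.1 hold
    by_cases hi : elt i ∈ A ∧ elt i ∉ S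
    · obtain ⟨hsub, hmem, hmask⟩ := hi_old hi.1 hi.2
      have hiA : insert (elt i) S ⊆ A := Finset.insert_subset hi.1 hSA
      rw [← hmask, show Nat.mul 16 (16 ^ t) = 16 ^ (t + 1) from (pow_succ' 16 t).symm] at hadjoin
      obtain ⟨M', rest', h', hsearch⟩ := h.adjoin hcard hiA hi.2 hsub hmem hadjoin
      refine ih h' hiA (fun a ha haS => ?_) (fun j hj hjA hjS => ?_) hsearch
      · obtain ⟨j, hj, rfl⟩ := hA a ha fun h => haS (Finset.mem_insert_of_mem h)
        rcases List.mem_cons.1 hj with rfl | hj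
        · exact absurd (Finset.mem_insert_self _ _) haS
        · exact ⟨j, hj, rfl⟩
      · obtain ⟨hsub, hmem, hmask⟩ := hold j hj hjA fun h => hjS (Finset.mem_insert_of_mem h)
        exact ⟨hsub.trans (Finset.subset_insert _ _), hmem,
          (mask_update_of_notMem (fun hij => hi.2 (hsub hij)) t).trans hmask⟩
    · refine ih h hSA (fun a ha haS => ?_) hold hskip
      obtain ⟨j, hj, rfl⟩ := hA a ha haS
      rcases List.mem_cons.1 hj with rfl | hj
      · exact absurd ⟨ha, haS⟩ hi
      · exact ⟨j, hj, rfl⟩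

end Soundness

section EvenEdgeSets

variable {V : Type*} [DecidableEq V]

/-- The degree modulo `2` of the vertex `v` in the graph with edge set `F`. -/
def parity (F : Finset (Sym2 V)) (v : V) : ZMod 2 := ∑ e ∈ F, if v ∈ e then 1 else 0

lemma parity_symmDiff (F F' : Finset (Sym2 V)) (v : V) :
    parity (F ∆ F') v = parity F v + parity F' v := by
  have hF := Finset.sum_inter_add_sum_sdiff F F' fun e => if v ∈ e then (1 : ZMod 2) else 0
  have hF' := Finset.sum_inter_add_sum_sdiff F' F fun e => if v ∈ e then (1 : ZMod 2) else 0
  rw [Finset.inter_comm] at hF'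
  rw [parity, parity, parity, ← hF, ← hF', symmDiff_def, Finset.sup_eq_union,
    Finset.sum_union disjoint_sdiff_sdiff]
  linear_combination - CharTwo.add_self_eq_zero (∑ e ∈ F ∩ F', if v ∈ e then (1 : ZMod 2) else 0)

lemma parity_insert {F : Finset (Sym2 V)} {x y : V} (hF : s(x, y) ∉ F) (hxy : x ≠ y) (v : V) :
    parity (insert s(x, y) F) v =
      (if v = x then 1 else 0) + (if v = y then 1 else 0) + parity F v := by
  rw [parity, Finset.sum_insert hF, parity]
  by_cases hx : v = x <;> by_cases hy : v = y <;> simp_all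

lemma exists_ne_of_parity_eq_zero {F : Finset (Sym2 V)} {e : Sym2 V} {v : V} (hF : parity F v = 0)
    (he : e ∈ F) (hv : v ∈ e) : ∃ e' ∈ F, e' ≠ e ∧ v ∈ e' := by
  by_contra! hunique
  rw [parity, Finset.sum_eq_single_of_mem e he fun e' he' hne => if_neg (hunique e' he' hne),
    if_pos hv] at hF
  exact one_ne_zero hF

/-- The cycle space of `G`: its members are the sets of edges of `G` that meet every vertex an even
number of times. -/
def cycleSpace (G : SimpleGraph V) : BinarySpace (Sym2 V) where
  Mem F := ↑F ⊆ G.edgeSet ∧ ∀ v, parity F v = 0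
  symmDiff_mem hF hF' :=
    ⟨fun e he => (Finset.mem_symmDiff.1 he).elim (fun h => hF.1 h.1) fun h => hF'.1 h.1,
      fun v => by rw [parity_symmDiff, hF.2, hF'.2, add_zero]⟩

end EvenEdgeSets

section CycleEnumerations

variable {V : Type*} {G : SimpleGraph V} {k : ℕ} {u : ℕ → V}

/-- The sequence `u` runs periodically through the vertices of a cycle of length `k` in `G`. -/
structure IsCycleEnum (G : SimpleGraph V) (k : ℕ) (u : ℕ → V) : Prop where
  three_le : 3 ≤ k
  eq_iff : ∀ {a b}, u a = u b ↔ a ≡ b [MOD k]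
  adj : ∀ a, G.Adj (u a) (u (a + 1))

namespace IsCycleEnum

lemma pos (h : IsCycleEnum G k u) : 0 < k := three_pos.trans_le h.three_le

lemma injective (h : IsCycleEnum G k u) : Function.Injective fun i : Fin k => u i :=
  fun i j hij => Fin.ext (Nat.ModEq.eq_of_lt_of_lt (h.eq_iff.1 hij) i.2 j.2)

lemma shift (h : IsCycleEnum G k u) (c : ℕ) : IsCycleEnum G k fun a => u (a + c) where
  three_le := h.three_le
  eq_iff := h.eq_iff.trans ⟨Nat.ModEq.add_right_cancel' c, Nat.ModEq.add_right c⟩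
  adj a := by simpa only [add_right_comm] using h.adj (a + c)

lemma add_period (h : IsCycleEnum G k u) (a : ℕ) : u (a + k) = u a :=
  h.eq_iff.2 (Nat.add_modEq_right ..)

lemma edge_eq_iff (h : IsCycleEnum G k u) {a b : ℕ} :
    s(u a, u (a + 1)) = s(u b, u (b + 1)) ↔ a ≡ b [MOD k] := by
  rw [Sym2.eq_iff, h.eq_iff, h.eq_iff, h.eq_iff, h.eq_iff]
  refine ⟨?_, fun hab => Or.inl ⟨hab, hab.add_right 1⟩⟩
  rintro (⟨hab, -⟩ | ⟨hab, hba⟩)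
  · exact hab
  · have htwo : b + 2 ≡ b + 0 [MOD k] := (hab.add_right 1).symm.trans hba
    have := Nat.le_of_dvd two_pos ((Nat.modEq_zero_iff_dvd).1 (htwo.add_left_cancel' b))
    exact absurd h.three_le (by lia)

lemma edge_injOn (h : IsCycleEnum G k u) {i j : ℕ} (hj : j ≤ i + k) :
    Set.InjOn (fun a => s(u a, u (a + 1))) (Finset.Ico i j : Set ℕ) := by
  intro a ha b hb hab
  have hmod : a ≡ b [MOD k] := h.edge_eq_iff.1 hab
  rw [Finset.coe_Ico, Set.mem_Ico] at ha hb
  exact hmod.eq_of_abs_lt (by rw [abs_lt]; lia)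

end IsCycleEnum

variable [DecidableEq V]

/-- The edges `s(u a, u (a + 1))` for `i ≤ a < j`. -/
def pathEdges (u : ℕ → V) (i j : ℕ) : Finset (Sym2 V) :=
  (Finset.Ico i j).image fun a => s(u a, u (a + 1))

/-- The edges of the cycle of length `k` with vertices `u 0, …, u (k - 1)`. -/
def cycleEdges (u : ℕ → V) (k : ℕ) : Finset (Sym2 V) := pathEdges u 0 k

namespace IsCycleEnum

lemma card_pathEdges (h : IsCycleEnum G k u) {i j : ℕ} (hj : j ≤ i + k) :
    (pathEdges u i j).card = j - i := by
  rw [pathEdges, Finset.card_image_of_injOn (h.edge_injOn hj), Nat.card_Ico]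

lemma card_cycleEdges (h : IsCycleEnum G k u) : (cycleEdges u k).card = k :=
  h.card_pathEdges (zero_add k).ge

lemma mem_cycleEdges (h : IsCycleEnum G k u) {e : Sym2 V} :
    e ∈ cycleEdges u k ↔ ∃ a, s(u a, u (a + 1)) = e := by
  rw [cycleEdges, pathEdges, Finset.mem_image]
  refine ⟨fun ⟨a, _, ha⟩ => ⟨a, ha⟩, fun ⟨a, ha⟩ => ⟨a % k, ?_, ?_⟩⟩
  · exact Finset.mem_Ico.2 ⟨Nat.zero_le _, Nat.mod_lt a h.pos⟩
  · rw [← ha]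
    exact h.edge_eq_iff.2 (Nat.mod_modEq a k)

lemma pathEdges_subset_cycleEdges (h : IsCycleEnum G k u) (i j : ℕ) :
    pathEdges u i j ⊆ cycleEdges u k := by
  intro e he
  obtain ⟨a, -, ha⟩ := Finset.mem_image.1 he
  exact h.mem_cycleEdges.2 ⟨a, ha⟩

lemma cycleEdges_subset_edgeSet (h : IsCycleEnum G k u) : ↑(cycleEdges u k) ⊆ G.edgeSet := by
  intro e he
  obtain ⟨a, rfl⟩ := h.mem_cycleEdges.1 he
  exact h.adj a

lemma parity_pathEdges (h : IsCycleEnum G k u) {i j : ℕ} (hij : i ≤ j) (hj : j ≤ i + k) (v : V) :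
    parity (pathEdges u i j) v = (if v = u i then 1 else 0) + if v = u j then 1 else 0 := by
  induction j, hij using Nat.le_induction with
  | base => simp [parity, pathEdges, CharTwo.add_self_eq_zero]
  | succ j hij ih =>
    have hsucc : pathEdges u i (j + 1) = insert s(u j, u (j + 1)) (pathEdges u i j) := by
      rw [pathEdges, ← Finset.insert_Ico_right_eq_Ico_add_one hij, Finset.image_insert]; rfl
    have hnew : s(u j, u (j + 1)) ∉ pathEdges u i j := by
      intro hmem
      have := Finset.card_insert_of_mem hmem
      rw [← hsucc, h.card_pathEdges hj, h.card_pathEdges (by lia)] at this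
      lia
    rw [hsucc, parity_insert hnew (h.adj j).ne, ih (by lia)]
    linear_combination CharTwo.add_self_eq_zero (if v = u j then (1 : ZMod 2) else 0)

lemma cycleEdges_mem (h : IsCycleEnum G k u) : (cycleSpace G).Mem (cycleEdges u k) := by
  refine ⟨h.cycleEdges_subset_edgeSet, fun v => ?_⟩
  rw [cycleEdges, h.parity_pathEdges (Nat.zero_le k) (zero_add k).ge, ← h.add_period 0, zero_add,
    CharTwo.add_self_eq_zero]

lemma insert_chord_mem (h : IsCycleEnum G k u) {i j : ℕ} (hij : i ≤ j) (hj : j ≤ i + k)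
    (hadj : G.Adj (u i) (u j)) (hchord : s(u i, u j) ∉ cycleEdges u k) :
    (cycleSpace G).Mem (insert s(u i, u j) (pathEdges u i j)) := by
  have hsub := h.pathEdges_subset_cycleEdges i j
  refine ⟨?_, fun v => ?_⟩
  · rw [Finset.coe_insert]
    exact Set.insert_subset hadj ((Finset.coe_subset.2 hsub).trans h.cycleEdges_subset_edgeSet)
  · rw [parity_insert (fun he => hchord (hsub he)) hadj.ne, h.parity_pathEdges hij hj,
      CharTwo.add_self_eq_zero]

lemma isCircuit_cycleEdges (h : IsCycleEnum G k u) : (cycleSpace G).IsCircuit (cycleEdges u k) := by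
  refine ⟨⟨⟨_, h.mem_cycleEdges.2 ⟨0, rfl⟩⟩, h.cycleEdges_mem⟩, fun F ⟨⟨e, he⟩, hF⟩ hsub => ?_⟩
  have step (a : ℕ) (ha : s(u a, u (a + 1)) ∈ F) : s(u (a + 1), u (a + 1 + 1)) ∈ F := by
    obtain ⟨e', he', hne, hv⟩ :=
      exists_ne_of_parity_eq_zero (hF.2 (u (a + 1))) ha (Sym2.mem_mk_right _ _)
    obtain ⟨b, rfl⟩ := h.mem_cycleEdges.1 (hsub he')
    rcases Sym2.mem_iff.1 hv with hb | hb
    · rwa [h.edge_eq_iff.2 (h.eq_iff.1 hb)]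
    · exact absurd (h.edge_eq_iff.2 ((h.eq_iff.1 hb).add_right_cancel' 1)).symm hne
  obtain ⟨a, rfl⟩ := h.mem_cycleEdges.1 (hsub he)
  have all (b : ℕ) (hb : a ≤ b) : s(u b, u (b + 1)) ∈ F :=
    Nat.le_induction he (fun b _ => step b) b hb
  intro e he
  obtain ⟨b, rfl⟩ := h.mem_cycleEdges.1 he
  have hk : a ≤ b + a * k :=
    (Nat.le_mul_of_pos_right a h.pos).trans (Nat.le_add_left ..)
  rw [← h.edge_eq_iff.2 (show b + a * k ≡ b [MOD k] from by simp [Nat.ModEq])]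
  exact all _ hk

end IsCycleEnum

end CycleEnumerations

section Subgraphs

variable {V : Type*} {G : SimpleGraph V} {k : ℕ} {u : ℕ → V}

lemma cycleGraph_adj_iff_modEq (hk : 2 ≤ k) {i j : Fin k} :
    (cycleGraph k).Adj i j ↔ (i : ℕ) + 1 ≡ j [MOD k] ∨ (j : ℕ) + 1 ≡ i [MOD k] := by
  obtain ⟨n, rfl⟩ := Nat.exists_eq_add_of_le' hk
  have hsub (i j : Fin (n + 2)) : i - j = 1 ↔ (j : ℕ) + 1 ≡ i [MOD n + 2] := by
    rw [sub_eq_iff_eq_add', eq_comm, Fin.ext_iff, Fin.val_add, Nat.ModEq, Nat.mod_eq_of_lt i.2]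
    simp
  rw [cycleGraph_adj, hsub, hsub, or_comm]

lemma cycleGraph_adj_mod_succ (hk : 2 ≤ k) (a : ℕ) :
    (cycleGraph k).Adj ⟨a % k, Nat.mod_lt _ (by lia)⟩ ⟨(a + 1) % k, Nat.mod_lt _ (by lia)⟩ :=
  (cycleGraph_adj_iff_modEq hk).2
    (Or.inl (((Nat.mod_modEq a k).add_right 1).trans (Nat.mod_modEq _ _).symm))

lemma IsCycleEnum.exists_copy (h : IsCycleEnum G k u) :
    ∃ φ : Copy (cycleGraph k) G, ∀ i, φ i = u i := by
  refine ⟨⟨⟨fun i => u i, fun {i j} hij => ?_⟩, h.injective⟩, fun i => rfl⟩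
  rcases (cycleGraph_adj_iff_modEq (by have := h.three_le; lia)).1 hij with hij | hij
  · rw [← h.eq_iff.2 hij]
    exact h.adj _
  · rw [← h.eq_iff.2 hij]
    exact (h.adj _).symm

lemma exists_isCycleEnum_of_copy (hk : 3 ≤ k) (φ : Copy (cycleGraph k) G) :
    ∃ u, IsCycleEnum G k u ∧ ∀ i : Fin k, φ i = u i := by
  have hpos : 0 < k := three_pos.trans_le hk
  refine ⟨fun a => φ ⟨a % k, Nat.mod_lt a hpos⟩, ⟨hk, ?_, fun a => ?_⟩, fun i => ?_⟩
  · exact φ.injective.eq_iff.trans Fin.ext_iff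
  · exact φ.toHom.map_adj (cycleGraph_adj_mod_succ (by lia) a)
  · simp only [Nat.mod_eq_of_lt i.2]

lemma setOf_iso_cycleGraph_eq_range :
    {H : G.Subgraph | Nonempty (H.coe ≃g cycleGraph k)} =
      Set.range (Copy.toSubgraph (A := cycleGraph k) (B := G)) := by
  rw [Copy.range_toSubgraph]
  exact Set.ext fun H => ⟨fun ⟨a⟩ => ⟨a.symm⟩, fun ⟨a⟩ => ⟨a.symm⟩⟩

lemma injOn_edgeSet (hk : 2 ≤ k) :
    Set.InjOn Subgraph.edgeSet {H : G.Subgraph | Nonempty (H.coe ≃g cycleGraph k)} := by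
  have verts_eq_support (H : G.Subgraph) (f : H.coe ≃g cycleGraph k) : H.verts = H.support := by
    refine Set.Subset.antisymm (fun v hv => ?_) H.support_subset_verts
    obtain ⟨a, ha⟩ := f.symm.surjective ⟨v, hv⟩
    have hadj := f.symm.map_adj_iff.2 (cycleGraph_adj_mod_succ hk a)
    simp only [Nat.mod_eq_of_lt a.2, ha] at hadj
    exact ⟨_, hadj⟩
  rintro H ⟨f⟩ H' ⟨f'⟩ hedge
  have hadj : H.Adj = H'.Adj := by
    ext x y
    rw [← Subgraph.mem_edgeSet, hedge, Subgraph.mem_edgeSet]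
  refine Subgraph.ext ?_ hadj
  rw [verts_eq_support H f, verts_eq_support H' f', Subgraph.support, Subgraph.support, hadj]

variable [DecidableEq V]

lemma IsCycleEnum.edgeSet_toSubgraph (h : IsCycleEnum G k u) {φ : Copy (cycleGraph k) G}
    (hφ : ∀ i, φ i = u i) : φ.toSubgraph.edgeSet = cycleEdges u k := by
  have hk : 2 ≤ k := Nat.le_of_succ_le h.three_le
  have hφ : ∀ i, φ.toHom i = u i := hφ
  ext ⟨x, y⟩
  rw [Finset.mem_coe, h.mem_cycleEdges, Subgraph.mem_edgeSet]
  simp only [Copy.toSubgraph, Subgraph.map_adj, Relation.Map, Subgraph.top_adj, hφ]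
  constructor
  · rintro ⟨i, j, hij, rfl, rfl⟩
    rcases (cycleGraph_adj_iff_modEq hk).1 hij with hij | hij
    · exact ⟨i, by rw [h.eq_iff.2 hij]⟩
    · exact ⟨j, by rw [h.eq_iff.2 hij, Sym2.eq_swap]⟩
  · rintro ⟨a, ha⟩
    have hmod (b : ℕ) : u (b % k) = u b := h.eq_iff.2 (Nat.mod_modEq b k)
    rcases Sym2.eq_iff.1 ha with ⟨rfl, rfl⟩ | ⟨rfl, rfl⟩
    · exact ⟨_, _, cycleGraph_adj_mod_succ hk a, hmod a, hmod (a + 1)⟩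
    · exact ⟨_, _, (cycleGraph_adj_mod_succ hk a).symm, hmod (a + 1), hmod a⟩

lemma image_edgeSet_cycles (hk : 3 ≤ k) :
    Subgraph.edgeSet '' {H : G.Subgraph | Nonempty (H.coe ≃g cycleGraph k)} =
      (↑) '' {F : Finset (Sym2 V) | ∃ u, IsCycleEnum G k u ∧ F = cycleEdges u k} := by
  rw [setOf_iso_cycleGraph_eq_range]
  ext E
  constructor
  · rintro ⟨_, ⟨φ, rfl⟩, rfl⟩
    obtain ⟨u, hu, hφ⟩ := exists_isCycleEnum_of_copy hk φ
    exact ⟨_, ⟨u, hu, rfl⟩, (hu.edgeSet_toSubgraph hφ).symm⟩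
  · rintro ⟨_, ⟨u, hu, rfl⟩, rfl⟩
    obtain ⟨φ, hφ⟩ := hu.exists_copy
    exact ⟨_, ⟨φ, rfl⟩, hu.edgeSet_toSubgraph hφ⟩

lemma cycleCount_eq_ncard (hk : 3 ≤ k) : cycleCount G k =
    {F : Finset (Sym2 V) | ∃ u, IsCycleEnum G k u ∧ F = cycleEdges u k}.ncard := by
  rw [cycleCount, ← (injOn_edgeSet (Nat.le_of_succ_le hk)).ncard_image, image_edgeSet_cycles hk,
    Set.ncard_image_of_injective _ Finset.coe_injective]

end Subgraphs

section CircuitsAreCycles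

variable {V : Type*}

lemma not_isAcyclic_of_forall_exists_ne [Finite V] {H : SimpleGraph V} {x y : V} (hxy : H.Adj x y)
    (h : ∀ {x y}, H.Adj x y → ∃ z, z ≠ x ∧ H.Adj y z) : ¬ H.IsAcyclic := by
  classical
  have := Fintype.ofFinite V
  intro hacyclic
  set c := H.connectedComponentMk x
  have : Nontrivial c :=
    ⟨⟨x, rfl⟩, ⟨y, c.mem_supp_of_adj_mem_supp rfl hxy⟩, Subtype.coe_ne_coe.1 hxy.ne⟩
  have htree := hacyclic.isTree_connectedComponent c
  obtain ⟨leaf, hleaf⟩ := htree.exists_vert_degree_one_of_nontrivial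
  obtain ⟨v, hv, hunique⟩ := degree_eq_one_iff_existsUnique_adj.1 hleaf
  have hadj : H.Adj v leaf := hv.symm
  obtain ⟨z, hzv, hz⟩ := h hadj
  exact hzv (congrArg Subtype.val (hunique ⟨z, c.mem_supp_of_adj_mem_supp leaf.2 hz⟩ hz))

variable [DecidableEq V] {G : SimpleGraph V} {F : Finset (Sym2 V)}

lemma exists_cycleEdges_subset [Finite V] (hne : F.Nonempty) (hF : (cycleSpace G).Mem F) :
    ∃ k u, IsCycleEnum G k u ∧ cycleEdges u k ⊆ F := by
  set H := fromEdgeSet (F : Set (Sym2 V))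
  have hadj {x y : V} : H.Adj x y ↔ s(x, y) ∈ F := by
    rw [fromEdgeSet_adj, Finset.mem_coe, and_iff_left_of_imp]
    exact fun hxy => G.ne_of_adj (hF.1 hxy)
  obtain ⟨⟨x, y⟩, hxy⟩ := hne
  have hcyclic : ¬ H.IsAcyclic := by
    refine not_isAcyclic_of_forall_exists_ne (hadj.2 hxy) fun {x y} hxy => ?_
    obtain ⟨_, hyz, hne, z, rfl⟩ :=
      exists_ne_of_parity_eq_zero (hF.2 y) (hadj.1 hxy) (Sym2.mem_mk_right x y)
    refine ⟨z, ?_, hadj.2 hyz⟩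
    rintro rfl
    exact hne Sym2.eq_swap
  simp only [isAcyclic_iff_free_cycleGraph, SimpleGraph.Free, not_forall, not_not] at hcyclic
  obtain ⟨k, hk, ⟨φ⟩⟩ := hcyclic
  obtain ⟨u, hu, -⟩ := exists_isCycleEnum_of_copy hk φ
  have hsub : cycleEdges u k ⊆ F := fun e he => by
    obtain ⟨a, rfl⟩ := hu.mem_cycleEdges.1 he
    exact hadj.1 (hu.adj a)
  exact ⟨k, u, ⟨hu.three_le, hu.eq_iff, fun a => hF.1 (hadj.1 (hu.adj a))⟩, hsub⟩

lemma isCircuit_cycleSpace_iff [Finite V] :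
    (cycleSpace G).IsCircuit F ↔ ∃ k u, IsCycleEnum G k u ∧ F = cycleEdges u k := by
  refine ⟨fun hF => ?_, ?_⟩
  · obtain ⟨k, u, hu, hsub⟩ := exists_cycleEdges_subset hF.prop.1 hF.prop.2
    have hne : (cycleEdges u k).Nonempty := ⟨_, hu.mem_cycleEdges.2 ⟨0, rfl⟩⟩
    exact ⟨k, u, hu, (hF.eq_of_subset hne hu.cycleEdges_mem hsub).symm⟩
  · rintro ⟨k, u, hu, rfl⟩
    exact hu.isCircuit_cycleEdges

end CircuitsAreCycles

section Pancyclic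

lemma IsCycleEnum.le_card {V : Type*} [Fintype V] {G : SimpleGraph V} {k : ℕ} {u : ℕ → V}
    (h : IsCycleEnum G k u) : k ≤ Fintype.card V := by
  simpa using Fintype.card_le_of_injective _ h.injective

variable {V : Type*} [Fintype V] [DecidableEq V] {G : SimpleGraph V} [DecidableRel G.Adj]

lemma mem_circuits_cycleSpace {F : Finset (Sym2 V)} :
    F ∈ (cycleSpace G).circuits G.edgeFinset ↔ ∃ k u, IsCycleEnum G k u ∧ F = cycleEdges u k := by
  rw [BinarySpace.mem_circuits, isCircuit_cycleSpace_iff, and_iff_right_of_imp]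
  rintro ⟨k, u, hu, rfl⟩
  exact fun e he => mem_edgeFinset.2 (hu.cycleEdges_subset_edgeSet he)

lemma count_circuitSizes_cycleSpace {k : ℕ} (hk : 3 ≤ k) :
    ((cycleSpace G).circuitSizes G.edgeFinset).count k = cycleCount G k := by
  rw [cycleCount_eq_ncard hk, BinarySpace.circuitSizes, Multiset.count_map, ← Finset.filter_val,
    Finset.card_val, ← Set.ncard_coe_finset]
  congr 1
  ext F
  rw [Finset.mem_coe, Finset.mem_filter, mem_circuits_cycleSpace]
  constructor
  · rintro ⟨⟨l, u, hu, rfl⟩, hcard⟩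
    obtain rfl : k = l := hcard.trans hu.card_cycleEdges
    exact ⟨u, hu, rfl⟩
  · rintro ⟨u, hu, rfl⟩
    exact ⟨⟨k, u, hu, rfl⟩, hu.card_cycleEdges.symm⟩

lemma le_of_mem_circuitSizes_cycleSpace {k : ℕ}
    (hk : k ∈ (cycleSpace G).circuitSizes G.edgeFinset) : 3 ≤ k ∧ k ≤ Fintype.card V := by
  obtain ⟨F, hF, rfl⟩ := Multiset.mem_map.1 hk
  obtain ⟨k, u, hu, rfl⟩ := mem_circuits_cycleSpace.1 hF
  rw [hu.card_cycleEdges]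
  exact ⟨hu.three_le, hu.le_card⟩

/-- The lengths of the cycles of an `(r)`-pancyclic graph on `n` vertices. -/
def lengths (n r : ℕ) : List ℕ := (List.range' 3 (n - 2)).flatMap (List.replicate r)

lemma count_lengths (n r k : ℕ) : (lengths n r).count k = if 3 ≤ k ∧ k ≤ n then r else 0 := by
  rw [lengths, List.count_flatMap]
  simp only [Function.comp_def, List.count_replicate, beq_iff_eq]
  rw [← List.sum_toFinset _ List.nodup_range', Finset.sum_ite_eq']
  refine if_congr ?_ rfl rfl
  rw [List.mem_toFinset, List.mem_range'_1]
  lia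

lemma circuitSizes_cycleSpace {r : ℕ} (h : IsRPancyclic G r) :
    (cycleSpace G).circuitSizes G.edgeFinset = lengths (Fintype.card V) r := by
  ext k
  rw [Multiset.coe_count, count_lengths]
  split_ifs with hk
  · rw [count_circuitSizes_cycleSpace hk.1, h.2 k hk.1 hk.2]
  · exact Multiset.count_eq_zero_of_notMem fun hmem => hk (le_of_mem_circuitSizes_cycleSpace hmem)

end Pancyclic

section Hamiltonian

variable {V : Type*} {G : SimpleGraph V} {n : ℕ} {u : ℕ → V}

lemma IsCycleEnum.exists_pos (h : IsCycleEnum G n u) :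
    ∃ pos : Sym2 V → ℕ, ∀ a < n, pos s(u a, u (a + 1)) = a := by
  have hinj := h.edge_injOn (i := 0) (zero_add n).ge
  exact ⟨Function.invFunOn _ _, fun a ha => hinj.leftInvOn_invFunOn (by simpa using ha)⟩

lemma IsCycleEnum.exists_lt_eq [Fintype V] (h : IsCycleEnum G n u) (hn : Fintype.card V = n)
    (v : V) : ∃ a < n, u a = v := by
  obtain ⟨i, hi⟩ := (h.injective.bijective_of_nat_card_le (by simp [hn])).surjective v
  exact ⟨i, i.2, hi⟩

lemma IsCycleEnum.exists_le_lt_eq [Fintype V] (h : IsCycleEnum G n u) (hn : Fintype.card V = n)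
    (e : Sym2 V) : ∃ i j, i ≤ j ∧ j < n ∧ s(u i, u j) = e := by
  induction e with | h x y
  obtain ⟨i, hi, rfl⟩ := h.exists_lt_eq hn x
  obtain ⟨j, hj, rfl⟩ := h.exists_lt_eq hn y
  rcases le_total i j with hij | hji
  · exact ⟨i, j, hij, hj, rfl⟩
  · exact ⟨j, i, hji, hi, Sym2.eq_swap⟩

variable [DecidableEq V]

lemma IsCycleEnum.cycleEdges_shift (h : IsCycleEnum G n u) (c : ℕ) :
    cycleEdges (fun a => u (a + c)) n = cycleEdges u n := by
  refine Finset.eq_of_subset_of_card_le (fun e he => ?_) ?_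
  · obtain ⟨a, rfl⟩ := (h.shift c).mem_cycleEdges.1 he
    exact h.mem_cycleEdges.2 ⟨a + c, by rw [add_right_comm]⟩
  · rw [h.card_cycleEdges, (h.shift c).card_cycleEdges]

/-- The number `d` is the distance along the cycle, in one of the two directions, between the ends
of an edge of `G` that is not an edge of the cycle. -/
def IsChordSpan (G : SimpleGraph V) (n : ℕ) (u : ℕ → V) (d : ℕ) : Prop :=
  ∃ c, G.Adj (u c) (u (c + d)) ∧ s(u c, u (c + d)) ∉ cycleEdges u n

lemma isChordSpan_sub {i j : ℕ} (hij : i ≤ j) (hadj : G.Adj (u i) (u j))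
    (hchord : s(u i, u j) ∉ cycleEdges u n) : IsChordSpan G n u (j - i) :=
  ⟨i, by rw [Nat.add_sub_cancel' hij]; exact ⟨hadj, hchord⟩⟩

lemma isChordSpan_shift {c d : ℕ} (h : IsCycleEnum G n u)
    (hd : IsChordSpan G n (fun a => u (a + c)) d) : IsChordSpan G n u d := by
  obtain ⟨a, ha⟩ := hd
  simp only [h.cycleEdges_shift, add_right_comm a d c] at ha
  exact ⟨a + c, ha⟩

lemma IsChordSpan.reflect {d : ℕ} (hd : IsChordSpan G n u d) (h : IsCycleEnum G n u)
    (hdn : d ≤ n) : IsChordSpan G n u (n - d) := by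
  obtain ⟨c, hadj, hchord⟩ := hd
  have hend : u (c + d + (n - d)) = u c := by
    rw [add_assoc, Nat.add_sub_cancel' hdn, h.add_period]
  refine ⟨c + d, ?_, ?_⟩
  · rw [hend]
    exact hadj.symm
  · rwa [hend, Sym2.eq_swap]

lemma IsChordSpan.sub_of_le {d : ℕ} (hd : IsChordSpan G n u d) (h : IsCycleEnum G n u)
    (hnd : n ≤ d) : IsChordSpan G n u (d - n) := by
  obtain ⟨c, hd⟩ := hd
  refine ⟨c, ?_⟩
  rwa [← h.add_period (c + (d - n)), add_assoc, Nat.sub_add_cancel hnd]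

lemma IsChordSpan.two_le {d : ℕ} (hd : IsChordSpan G n u d) (h : IsCycleEnum G n u) : 2 ≤ d := by
  obtain ⟨c, hadj, hchord⟩ := hd
  rcases d with _ | _ | d
  · exact absurd rfl hadj.ne
  · exact absurd (h.mem_cycleEdges.2 ⟨c, rfl⟩) hchord
  · lia

lemma exists_minimal_isChordSpan {d₀ : ℕ} (hd₀ : IsChordSpan G n u d₀) (h : IsCycleEnum G n u) :
    ∃ d, IsChordSpan G n u d ∧ 2 ≤ d ∧ d ≤ n / 2 ∧ ∀ d', IsChordSpan G n u d' → d ≤ d' := by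
  classical
  have hex : ∃ d, IsChordSpan G n u d := ⟨d₀, hd₀⟩
  have hd := Nat.find_spec hex
  have hmin (d') (hd' : IsChordSpan G n u d') : Nat.find hex ≤ d' := Nat.find_min' hex hd'
  have hlt : Nat.find hex < n := by
    by_contra! hle
    have := hmin _ (hd.sub_of_le h hle)
    have := h.pos
    lia
  have := hmin _ (hd.reflect h hlt.le)
  exact ⟨_, hd, hd.two_le h, by lia, hmin⟩

/-- The pairs `(i, j)` with `i < j < n` whose distance along a cycle of length `n` is at least `d`
in both directions. -/
def chords (n d : ℕ) : List (ℕ × ℕ) :=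
  ((List.range n).product (List.range n)).filter fun p => p.1 + d ≤ p.2 ∧ p.2 + d ≤ p.1 + n

lemma mem_chords {d : ℕ} {p : ℕ × ℕ} :
    p ∈ chords n d ↔ (p.1 < n ∧ p.2 < n) ∧ p.1 + d ≤ p.2 ∧ p.2 + d ≤ p.1 + n := by
  obtain ⟨i, j⟩ := p
  rw [chords, List.mem_filter, List.pair_mem_product, List.mem_range, List.mem_range,
    decide_eq_true_iff]

lemma IsCycleEnum.exists_mem_chords [Fintype V] (h : IsCycleEnum G n u) (hn : Fintype.card V = n)
    {d : ℕ} (hmin : ∀ d', IsChordSpan G n u d' → d ≤ d') {e : Sym2 V} (he : e ∈ G.edgeSet)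
    (hchord : e ∉ cycleEdges u n) : ∃ p ∈ chords n d, s(u p.1, u p.2) = e := by
  obtain ⟨i, j, hij, hj, rfl⟩ := h.exists_le_lt_eq hn e
  have hspan := isChordSpan_sub hij he hchord
  have := hmin _ hspan
  have := hmin _ (hspan.reflect h (by lia))
  exact ⟨(i, j), mem_chords.2 ⟨⟨by lia, hj⟩, by lia, by lia⟩, rfl⟩

end Hamiltonian

section Check

/-- The mask of `pathEdges u i j` for `p = (i, j)`, when `s(u a, u (a + 1))` has position `a`. -/
def pathMask (p : ℕ × ℕ) : ℕ := ((List.range' p.1 (p.2 - p.1)).map (16 ^ ·)).sum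

/-- Whether the search excludes the `(r)`-pancyclic graphs of order `n` with a Hamiltonian cycle
whose shortest chord joins vertices at distance `d` along it. That chord may start anywhere on the
cycle, so it is taken to be `(0, d)`. -/
def checkSpan (n r d : ℕ) : Bool :=
  forceList (((chords n d).erase (0, d)).map pathMask) fun ps =>
    adjoin (pathMask (0, d) + 16 ^ n) [pathMask (0, n)] ((lengths n r).erase n)
      (search ps (16 ^ (n + 1)))

/-- Whether the search excludes all `(r)`-pancyclic graphs of order `n`. The first conjunct deals
with the graphs that have no edges besides those of a Hamiltonian cycle. -/
def check (n r : ℕ) : Bool :=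
  !((lengths n r).erase n).isEmpty && (List.range' 2 (n / 2 - 1)).all (checkSpan n r)

set_option maxRecDepth 100000 in
lemma check_two : ∀ n ∈ [3, 4, 5, 6, 7, 9, 10], check n 2 := by decide +kernel

end Check

section CheckSoundness

variable {V : Type*} [DecidableEq V] {G : SimpleGraph V} {n r : ℕ} {u : ℕ → V} {pos : Sym2 V → ℕ}

lemma mask_pathEdges (h : IsCycleEnum G n u) (hpos : ∀ a < n, pos s(u a, u (a + 1)) = a) {i j : ℕ}
    (hj : j ≤ n) : mask pos (pathEdges u i j) = pathMask (i, j) := by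
  rw [mask, pathEdges, Finset.sum_image (h.edge_injOn (by lia)), pathMask,
    ← List.sum_toFinset _ List.nodup_range', List.toFinset_range'_1]
  have hIco : Finset.Ico i j = Finset.Ico i (i + (j - i)) := by
    ext a
    rw [Finset.mem_Ico, Finset.mem_Ico]
    lia
  refine Finset.sum_congr hIco fun a ha => ?_
  rw [hpos a (by rw [Finset.mem_Ico] at ha; lia)]

lemma circuitSizes_cycleEdges (h : IsCycleEnum G n u) :
    (cycleSpace G).circuitSizes (cycleEdges u n) = {n} := by
  rw [BinarySpace.circuitSizes, BinarySpace.circuits_of_isCircuit h.isCircuit_cycleEdges,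
    Finset.singleton_val, Multiset.map_singleton, h.card_cycleEdges]

variable [Fintype V] [DecidableRel G.Adj]

lemma isState_cycleEdges (h : IsCycleEnum G n u) (hpos : ∀ a < n, pos s(u a, u (a + 1)) = a)
    (hsizes : (cycleSpace G).circuitSizes G.edgeFinset = lengths n r) (hn : n ∈ lengths n r) :
    IsState (cycleSpace G) G.edgeFinset (cycleEdges u n) pos n [pathMask (0, n)]
      ((lengths n r).erase n) where
  injOn := by
    intro e he e' he' hee'
    obtain ⟨a, ha, rfl⟩ := Finset.mem_image.1 he
    obtain ⟨b, hb, rfl⟩ := Finset.mem_image.1 he'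
    rw [Finset.mem_Ico] at ha hb
    rw [hpos a ha.2, hpos b hb.2] at hee'
    rw [hee']
  pos_lt e he := by
    obtain ⟨a, ha, rfl⟩ := Finset.mem_image.1 he
    rw [Finset.mem_Ico] at ha
    rw [hpos a ha.2]
    exact ha.2
  masks := by
    rw [BinarySpace.members_of_isCircuit h.isCircuit_cycleEdges, ← mask_pathEdges h hpos le_rfl]
    rfl
  sizes := by
    rw [circuitSizes_cycleEdges h, hsizes, ← Multiset.coe_erase, add_comm, Multiset.singleton_add,
      Multiset.cons_erase (Multiset.mem_coe.2 hn)]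

lemma exists_chord (h : IsCycleEnum G n u)
    (hsizes : (cycleSpace G).circuitSizes G.edgeFinset = lengths n r)
    (hextra : (lengths n r).erase n ≠ []) : ∃ e ∈ G.edgeSet, e ∉ cycleEdges u n := by
  by_contra! hall
  have hG : G.edgeFinset = cycleEdges u n := Finset.Subset.antisymm
    (fun e he => hall e (mem_edgeFinset.1 he)) fun e he =>
      mem_edgeFinset.2 (h.cycleEdges_subset_edgeSet he)
  have hone : ((lengths n r : List ℕ) : Multiset ℕ) = {n} := by
    rw [← hsizes, hG, circuitSizes_cycleEdges h]
  rw [Multiset.coe_eq_singleton] at hone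
  simp [hone] at hextra

lemma not_checkSpan (h : IsCycleEnum G n u) (hV : Fintype.card V = n)
    (hsizes : (cycleSpace G).circuitSizes G.edgeFinset = lengths n r) (hn : n ∈ lengths n r)
    (hlt : n < 15) {d : ℕ} (hdn : d ≤ n) (hd : G.Adj (u 0) (u d))
    (hchord : s(u 0, u d) ∉ cycleEdges u n) (hmin : ∀ d', IsChordSpan G n u d' → d ≤ d') :
    ¬ checkSpan n r d := by
  intro hcheck
  have hcard : ∀ k ∈ (cycleSpace G).circuitSizes G.edgeFinset, k < 15 := fun k hk =>
    (le_of_mem_circuitSizes_cycleSpace hk).2.trans_lt (hV ▸ hlt)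
  obtain ⟨pos, hpos⟩ := h.exists_pos
  have hrim : cycleEdges u n ⊆ G.edgeFinset := fun e he =>
    mem_edgeFinset.2 (h.cycleEdges_subset_edgeSet he)
  have hS : insert s(u 0, u d) (cycleEdges u n) ⊆ G.edgeFinset :=
    Finset.insert_subset (mem_edgeFinset.2 hd) hrim
  rw [checkSpan, forceList_eq, ← mask_pathEdges h hpos hdn] at hcheck
  obtain ⟨M, rest, hstate, hsearch⟩ := (isState_cycleEdges h hpos hsizes hn).adjoin hcard hS hchord
    (h.pathEdges_subset_cycleEdges 0 d) (h.insert_chord_mem d.zero_le (by lia) hd hchord) hcheck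
  refine hstate.not_search (elt := fun p => s(u p.1, u p.2)) (old := fun p => pathEdges u p.1 p.2)
    hcard _ hS (fun e he heS => ?_) (fun p hp hpG hpS => ?_) hsearch
  · rw [Finset.mem_insert, not_or] at heS
    obtain ⟨p, hp, rfl⟩ := h.exists_mem_chords hV hmin (mem_edgeFinset.1 he) heS.2
    refine ⟨p, (List.mem_erase_of_ne ?_).2 hp, rfl⟩
    rintro rfl
    exact heS.1 rfl
  · obtain ⟨hends, hp⟩ := mem_chords.1 (List.mem_of_mem_erase hp)
    have hsub := h.pathEdges_subset_cycleEdges p.1 p.2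
    refine ⟨hsub.trans (Finset.subset_insert _ _), ?_, ?_⟩
    · exact h.insert_chord_mem (by lia) (by lia) (mem_edgeFinset.1 hpG)
        fun hmem => hpS (Finset.mem_insert_of_mem hmem)
    · rw [mask_update_of_notMem fun hmem => hchord (hsub hmem), mask_pathEdges h hpos hends.2.le]

lemma exists_isCycleEnum_of_mem_circuitSizes
    (hn : n ∈ (cycleSpace G).circuitSizes G.edgeFinset) : ∃ u, IsCycleEnum G n u := by
  obtain ⟨F, hF, rfl⟩ := Multiset.mem_map.1 hn
  obtain ⟨k, u, hu, rfl⟩ := mem_circuits_cycleSpace.1 hF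
  exact ⟨u, by rwa [hu.card_cycleEdges]⟩

end CheckSoundness

theorem not_isRPancyclic_of_check {V : Type*} [Fintype V] {G : SimpleGraph V} {n r : ℕ} (hr : 0 < r)
    (hn : n < 15) (hcheck : check n r) (hV : Fintype.card V = n) : ¬ IsRPancyclic G r := by
  classical
  intro hG
  have hsizes := circuitSizes_cycleSpace hG
  have hmem : n ∈ lengths n r := by
    rw [← List.count_pos_iff, count_lengths, if_pos ⟨hV ▸ hG.1, le_rfl⟩]
    exact hr
  rw [hV] at hsizes
  obtain ⟨u, hu⟩ := exists_isCycleEnum_of_mem_circuitSizes (hsizes ▸ Multiset.mem_coe.2 hmem)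
  rw [check, Bool.and_eq_true, List.all_eq_true, Bool.not_eq_true', List.isEmpty_eq_false_iff]
    at hcheck
  obtain ⟨e, he, hchord⟩ := exists_chord hu hsizes hcheck.1
  obtain ⟨i, j, hij, -, rfl⟩ := hu.exists_le_lt_eq hV e
  obtain ⟨d, ⟨c, hadj, hchord⟩, htwo, hhalf, hmin⟩ :=
    exists_minimal_isChordSpan (isChordSpan_sub hij he hchord) hu
  refine not_checkSpan (d := d) (hu.shift c) hV hsizes hmem hn (by lia) ?_ ?_
    (fun d' hd' => hmin d' (isChordSpan_shift hu hd')) (hcheck.2 d (List.mem_range'_1.2 (by lia)))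
  · rwa [zero_add, add_comm]
  · rwa [hu.cycleEdges_shift, zero_add, add_comm]

end Pancyclic

theorem no_two_pancyclic_small_orders {V : Type*} [Fintype V] (G : SimpleGraph V)
    (hv : Fintype.card V = 9 ∨ Fintype.card V = 10 ∨ Fintype.card V < 8) :
    ¬ IsRPancyclic G 2 := by
  intro hG
  have horder : Fintype.card V ∈ [3, 4, 5, 6, 7, 9, 10] := by
    have := hG.1
    simp only [List.mem_cons, List.not_mem_nil, or_false]
    lia
  exact Pancyclic.not_isRPancyclic_of_check two_pos (by lia) (Pancyclic.check_two _ horder) rfl hG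
end
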